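/- Fix an integer n ≥ 1. There exist constants C, C' > 0 such that, with c = 1 + 1/log(2πY) and V = e^{C√(log Y)}, as Y → ∞: (1/2π) ∫_{−V}^{V} (ζ'/ζ)^{(n)}(c + it) · ζ(c + it) · Y^{c+it}/(c + it) dt = M_n(Y) + O(Y e^{−C'√(log Y)}), where M_n(Y) = (−1)^{n+1} (1/(n+1)) Y log^{n+1} Y + (−1)^{n+1} ∑_{k=0}^{n} binom(n,k) (−1)^k k! (−1 + ∑_{j=0}^{k} (−1)^j C_j) Y log^{n−k} Y + n! A_n Y. -/

import Mathlib

open Complex Finset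

/-- The vertical line integral
`(1/2πi) ∫_{c-iV}^{c+iV} (ζ'/ζ)^{(n)}(s) ζ(s) Y^s / s ds`, written as a real
integral in `t`. -/
noncomputable def perronIntegral (n : ℕ) (c V Y : ℝ) : ℂ :=
  ((1 / (2 * Real.pi) : ℝ) : ℂ) *
    ∫ t in -V..V,
      iteratedDeriv n (fun s => deriv riemannZeta s / riemannZeta s) (↑c + ↑t * I) *
        riemannZeta (↑c + ↑t * I) * (Y : ℂ) ^ (↑c + ↑t * I) / (↑c + ↑t * I)

/-- `M_n(Y)`, the residue at `s = 1` of `(ζ'/ζ)^{(n)}(s) ζ(s) Y^s / s`,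
expressed via the Laurent coefficients `C j` of `ζ` and `A j` of `ζ'/ζ`
about `s = 1`. -/
noncomputable def Mterm (C A : ℕ → ℂ) (n : ℕ) (Y : ℝ) : ℂ :=
  (-1 : ℂ) ^ (n + 1) * (1 / ((n : ℂ) + 1)) * ((Y * Real.log Y ^ (n + 1) : ℝ) : ℂ)
  + (-1 : ℂ) ^ (n + 1) *
      ∑ k ∈ Finset.range (n + 1),
        (n.choose k : ℂ) * (-1 : ℂ) ^ k * (k.factorial : ℂ) *
          (-1 + ∑ j ∈ Finset.range (k + 1), (-1 : ℂ) ^ j * C j) *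
          ((Y * Real.log Y ^ (n - k) : ℝ) : ℂ)
  + (n.factorial : ℂ) * A n * ((Y : ℝ) : ℂ)

/-!
The function `ζ₁(s) = (s - 1) ζ(s)` is entire and `ζ'/ζ = ζ₁'/ζ₁ - 1/(s - 1)`, so near `s = 1` the
integrand is an explicit combination of quotients of analytic functions by powers of `s - 1`, and
Cauchy's formulas on a rectangle around `1` give its residue; multiplying the Taylor series of
`ζ₁(s)`, `1/s` and `Y ^ s` at `1` identifies the residue with `Mterm`.

Writing `ζ₁'/ζ₁` as a sum over nearby zeros plus `O(log (|t| + 3))`, the inequality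
`3 + 4 cos θ + cos 2θ ≥ 0` yields both a zero-free region `Re s ≥ 1 - c / log (|t| + 3)` and the
bound `ζ₁'/ζ₁ = O(log² (|t| + 3))` in it. With the left edge of a rectangle of height `V` at
`1 - c / (4 log V)`, Cauchy's estimate controls the `n`-th derivative, and with
`|ζ₁(s)| ≪ |s - 1| |t| ^ (1/2)` the edges contribute `(log V) ^ (n + 3)` times
`Y / √V + V ^ 3 Y ^ (1 - c / (4 log V))`. Both terms are small for `log V` a small multiple
of `√(log Y)`.
-/

namespace PerronZeta

/-! ### Growth of `(s - 1) ζ(s)` to the right of the imaginary axis -/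

lemma sum_range_add_one_rpow_neg_le {a : ℝ} (ha₀ : 0 ≤ a) (ha₁ : a < 1) (N : ℕ) :
    ∑ n ∈ range N, ((n : ℝ) + 1) ^ (-a) ≤ (N : ℝ) ^ (1 - a) / (1 - a) := by
  have h1a : 0 < 1 - a := sub_pos.mpr ha₁
  induction N with
  | zero => simpa using by positivity
  | succ N ih =>
    have hN : (0 : ℝ) < N + 1 := by positivity
    have bernoulli : (1 + -1 / ((N : ℝ) + 1)) ^ (1 - a) ≤ 1 + (1 - a) * (-1 / ((N : ℝ) + 1)) :=
      rpow_one_add_le_one_add_mul_self ((le_div_iff₀ hN).mpr (by nlinarith)) h1a.le (by linarith)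
    have step : (1 - a) * ((N : ℝ) + 1) ^ (-a) ≤ ((N : ℝ) + 1) ^ (1 - a) - (N : ℝ) ^ (1 - a) := by
      have hmul : (N : ℝ) ^ (1 - a) =
          ((N : ℝ) + 1) ^ (1 - a) * (1 + -1 / ((N : ℝ) + 1)) ^ (1 - a) := by
        have hquot : 1 + -1 / ((N : ℝ) + 1) = N / (N + 1) := by field_simp; ring
        rw [hquot, ← Real.mul_rpow hN.le (by positivity), mul_div_cancel₀ _ hN.ne']
      have hshift : ((N : ℝ) + 1) ^ (-a) = ((N : ℝ) + 1) ^ (1 - a) / (N + 1) := by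
        rw [← Real.rpow_sub_one hN.ne']; ring_nf
      have hle := mul_le_mul_of_nonneg_left bernoulli (Real.rpow_nonneg hN.le (1 - a))
      rw [← hmul] at hle
      rw [hshift]
      linear_combination hle
    rw [sum_range_succ, le_div_iff₀ h1a]
    rw [le_div_iff₀ h1a] at ih
    push_cast
    linear_combination ih + step

lemma summable_add_one_rpow_neg {a : ℝ} (ha : 0 < a) :
    Summable fun n : ℕ => ((n : ℝ) + 1) ^ (-a - 1) := by
  simpa using (summable_nat_add_iff 1).mpr
    (Real.summable_nat_rpow.mpr (show -a - 1 < -1 by linarith))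

lemma tsum_add_one_rpow_neg_le {a : ℝ} (ha : 0 < a) {N : ℕ} (hN : N ≠ 0) :
    ∑' n : ℕ, (((n + N : ℕ) : ℝ) + 1) ^ (-a - 1) ≤ (N : ℝ) ^ (-a) / a := by
  have hN₀ : (0 : ℝ) < N := by positivity
  refine ((summable_nat_add_iff N).mpr (summable_add_one_rpow_neg ha)).tsum_le_of_sum_range_le
    fun M => ?_
  have hanti : AntitoneOn (fun x : ℝ => x ^ (-a - 1)) (Set.Icc N (N + M)) := fun x hx y _ hxy =>
    Real.rpow_le_rpow_of_nonpos (hN₀.trans_le hx.1) hxy (by linarith)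
  have hzero : (0 : ℝ) ∉ Set.uIcc (N : ℝ) (N + M) := by
    rw [Set.uIcc_of_le (by simp)]
    exact fun h => hN₀.not_ge h.1
  calc ∑ n ∈ range M, (((n + N : ℕ) : ℝ) + 1) ^ (-a - 1)
      = ∑ n ∈ range M, ((N : ℝ) + ((n + 1 : ℕ) : ℝ)) ^ (-a - 1) :=
        sum_congr rfl fun n _ => by push_cast; ring_nf
    _ ≤ ∫ x in (N : ℝ)..N + M, x ^ (-a - 1) := hanti.sum_le_integral
    _ = ((N : ℝ) ^ (-a) - (N + M : ℝ) ^ (-a)) / a := by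
        rw [integral_rpow (Or.inr ⟨by linarith, hzero⟩), sub_add_cancel, div_neg, ← neg_div,
          neg_sub]
    _ ≤ (N : ℝ) ^ (-a) / a := by
        gcongr
        exact sub_le_self _ (by positivity)

lemma norm_natCast_add_one_cpow (n : ℕ) (s : ℂ) : ‖((n : ℂ) + 1) ^ s‖ = ((n : ℝ) + 1) ^ s.re := by
  rw [← Complex.norm_cpow_eq_rpow_re_of_pos (by positivity)]
  push_cast
  rfl

lemma norm_ofReal_cpow_neg_sub_le {m x : ℝ} (hm : 0 < m) (hx : m ≤ x) {s : ℂ} (hs : -1 ≤ s.re) :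
    ‖(x : ℂ) ^ (-s) - (m : ℂ) ^ (-s)‖ ≤ ‖s‖ * m ^ (-s.re - 1) * (x - m) := by
  rcases eq_or_ne s 0 with rfl | hs₀
  · simp
  refine norm_image_sub_le_of_norm_deriv_le_segment' (f := fun y : ℝ => (y : ℂ) ^ (-s))
    (f' := fun y : ℝ => -s * (y : ℂ) ^ (-s - 1)) (fun y hy => ?_) (fun y hy => ?_) x ⟨hx, le_rfl⟩
  · exact (hasDerivAt_ofReal_cpow_const (hm.trans_le hy.1).ne'
      (neg_ne_zero.mpr hs₀)).hasDerivWithinAt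
  · rw [norm_mul, norm_neg, norm_cpow_eq_rpow_re_of_pos (hm.trans_le hy.1)]
    gcongr
    simpa using Real.rpow_le_rpow_of_nonpos hm hy.1 (show -s.re - 1 ≤ 0 by linarith)

/-- The integral `(s - 1) ∫ ((n + 1)^(-s) - x^(-s)) dx` over `[n + 1, n + 2]`, in closed form.
Summed over `n`, these telescope to an expansion of `(s - 1) ζ(s) - 1` that converges for
`0 < Re s`. -/
noncomputable def zetaTerm (n : ℕ) (s : ℂ) : ℂ :=
  (s - 1) * ((n : ℂ) + 1) ^ (-s) - ((n : ℂ) + 1) ^ (1 - s) + ((n : ℂ) + 2) ^ (1 - s)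

lemma norm_zetaTerm_le (n : ℕ) {s : ℂ} (hs : -1 ≤ s.re) :
    ‖zetaTerm n s‖ ≤ ‖s - 1‖ * ‖s‖ * ((n : ℝ) + 1) ^ (-s.re - 1) := by
  rcases eq_or_ne s 1 with rfl | hs₁
  · simp [zetaTerm]
  have h1s : 1 - s ≠ 0 := sub_ne_zero.mpr hs₁.symm
  set m : ℝ := (n : ℝ) + 1 with hm
  have hm₀ : 0 < m := by positivity
  let F : ℝ → ℂ := fun y => (s - 1) * (m : ℂ) ^ (-s) * y + (y : ℂ) ^ (1 - s)
  have hF : zetaTerm n s = F (m + 1) - F m := by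
    simp only [zetaTerm, F, hm]
    push_cast
    rw [show (n : ℂ) + 1 + 1 = n + 2 by ring]
    ring
  have hderiv : ∀ y ∈ Set.Icc m (m + 1),
      HasDerivWithinAt F ((1 - s) * ((y : ℂ) ^ (-s) - (m : ℂ) ^ (-s))) (Set.Icc m (m + 1)) y := by
    intro y hy
    have hpow := hasDerivAt_ofReal_cpow_const (hm₀.trans_le hy.1).ne' h1s
    have hlin := (ofRealCLM.hasDerivAt (x := y)).const_mul ((s - 1) * (m : ℂ) ^ (-s))
    refine ((hlin.add hpow).congr_deriv ?_).hasDerivWithinAt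
    rw [ofRealCLM_apply, ofReal_one, sub_sub_cancel_left]
    ring
  rw [hF]
  refine (norm_image_sub_le_of_norm_deriv_le_segment'
    (C := ‖s - 1‖ * ‖s‖ * m ^ (-s.re - 1)) hderiv (fun y hy => ?_) (m + 1) (by simp)).trans_eq
    (by ring)
  rw [norm_mul, norm_sub_rev 1 s, mul_assoc]
  gcongr
  refine (norm_ofReal_cpow_neg_sub_le hm₀ hy.1 hs).trans (mul_le_of_le_one_right (by positivity) ?_)
  linarith [hy.2]

lemma norm_zetaTerm_le_of_le_re (n : ℕ) {a : ℝ} (ha : -1 ≤ a) {s : ℂ} (hs : a ≤ s.re) :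
    ‖zetaTerm n s‖ ≤ ‖s - 1‖ * ‖s‖ * ((n : ℝ) + 1) ^ (-a - 1) := by
  refine (norm_zetaTerm_le n (ha.trans hs)).trans ?_
  gcongr
  linarith [n.cast_nonneg (α := ℝ)]

lemma summable_zetaTerm {s : ℂ} (hs : 0 < s.re) : Summable fun n => zetaTerm n s :=
  .of_norm_bounded ((summable_add_one_rpow_neg hs).mul_left _)
    fun n => norm_zetaTerm_le n (by linarith)

lemma differentiable_zetaTerm (n : ℕ) : Differentiable ℂ (zetaTerm n) := by
  have h1 : (n : ℂ) + 1 ≠ 0 := by exact_mod_cast n.succ_ne_zero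
  have h2 : (n : ℂ) + 2 ≠ 0 := by exact_mod_cast (n + 1).succ_ne_zero
  have hpow {b : ℂ} (hb : b ≠ 0) {f : ℂ → ℂ} (hf : Differentiable ℂ f) :
      Differentiable ℂ fun s => b ^ f s := fun s => (hf s).const_cpow (.inl hb)
  exact (((differentiable_id.sub_const 1).mul (hpow h1 differentiable_neg)).sub
    (hpow h1 (differentiable_id.const_sub 1))).add (hpow h2 (differentiable_id.const_sub 1))

lemma sum_range_zetaTerm (N : ℕ) (s : ℂ) :
    ∑ n ∈ range N, zetaTerm n s =
      (s - 1) * ∑ n ∈ range N, ((n : ℂ) + 1) ^ (-s) + ((N : ℂ) + 1) ^ (1 - s) - 1 := by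
  induction N with
  | zero => simp
  | succ N ih =>
    rw [sum_range_succ, sum_range_succ, ih, zetaTerm]
    push_cast
    rw [show (N : ℂ) + 1 + 1 = N + 2 by ring]
    ring

lemma riemannZeta₁_eq_sub_mul {s : ℂ} (hs : s ≠ 1) :
    riemannZeta₁ s = (s - 1) * riemannZeta s := by
  rw [riemannZeta_eq_inv_sub_mul hs, mul_inv_cancel_left₀ (sub_ne_zero.mpr hs)]

lemma ne_one_of_one_lt_re {s : ℂ} (hs : 1 < s.re) : s ≠ 1 := by
  rintro rfl
  simp at hs

lemma riemannZeta₁_eq_one_add_tsum_of_one_lt_re {s : ℂ} (hs : 1 < s.re) :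
    riemannZeta₁ s = 1 + ∑' n, zetaTerm n s := by
  have hpartial := (summable_zetaTerm (zero_lt_one.trans hs)).hasSum.tendsto_sum_nat
  have hzeta : Filter.Tendsto (fun N => ∑ n ∈ range N, ((n : ℂ) + 1) ^ (-s)) Filter.atTop
      (nhds (riemannZeta s)) := by
    have hsummable : Summable fun n : ℕ => 1 / ((n : ℂ) + 1) ^ s := by
      simpa using (summable_nat_add_iff 1).mpr (Complex.summable_one_div_nat_cpow.mpr hs)
    rw [zeta_eq_tsum_one_div_nat_add_one_cpow hs]
    simpa only [cpow_neg, one_div] using hsummable.hasSum.tendsto_sum_nat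
  have hboundary : Filter.Tendsto (fun N : ℕ => ((N : ℂ) + 1) ^ (1 - s)) Filter.atTop (nhds 0) := by
    rw [tendsto_zero_iff_norm_tendsto_zero]
    simp only [norm_natCast_add_one_cpow, sub_re, one_re, ← neg_sub s.re 1]
    exact (tendsto_rpow_neg_atTop (sub_pos.mpr hs)).comp
      (Filter.tendsto_atTop_add_const_right _ _ tendsto_natCast_atTop_atTop)
  have hlimit := ((hzeta.const_mul (s - 1)).add hboundary).sub_const 1
  simp_rw [← sum_range_zetaTerm] at hlimit
  rw [tendsto_nhds_unique hpartial hlimit, riemannZeta₁_eq_sub_mul (ne_one_of_one_lt_re hs)]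
  ring

lemma differentiableOn_tsum_zetaTerm :
    DifferentiableOn ℂ (fun s => ∑' n, zetaTerm n s) {s : ℂ | 0 < s.re} := by
  intro s (hs : 0 < s.re)
  let U : Set ℂ := {z | s.re / 2 < z.re} ∩ Metric.ball s 1
  have hU : IsOpen U := (isOpen_lt continuous_const continuous_re).inter Metric.isOpen_ball
  have hsU : s ∈ U := ⟨half_lt_self hs, Metric.mem_ball_self one_pos⟩
  have hbound (n : ℕ) (w : ℂ) (hw : w ∈ U) : ‖zetaTerm n w‖ ≤
      (‖s‖ + 2) * (‖s‖ + 1) * ((n : ℝ) + 1) ^ (-(s.re / 2) - 1) := by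
    refine (norm_zetaTerm_le_of_le_re n (by linarith) (le_of_lt hw.1)).trans ?_
    have hws : ‖w‖ ≤ ‖s‖ + 1 := by
      linarith [norm_sub_norm_le w s, mem_ball_iff_norm.mp hw.2]
    have hw1 : ‖w - 1‖ ≤ ‖s‖ + 2 := by
      linarith [norm_sub_le w 1, norm_one (α := ℂ)]
    gcongr
  exact ((differentiableOn_tsum_of_summable_norm
    ((summable_add_one_rpow_neg (half_pos hs)).mul_left _)
    (fun n => (differentiable_zetaTerm n).differentiableOn) hU hbound).differentiableAt
    (hU.mem_nhds hsU)).differentiableWithinAt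

lemma riemannZeta₁_eq_one_add_tsum {s : ℂ} (hs : 0 < s.re) :
    riemannZeta₁ s = 1 + ∑' n, zetaTerm n s := by
  have hopen : IsOpen {s : ℂ | 0 < s.re} := isOpen_lt continuous_const continuous_re
  refine (differentiable_riemannZeta₁.differentiableOn.analyticOnNhd hopen
    ).eqOn_of_preconnected_of_eventuallyEq
    ((differentiableOn_tsum_zetaTerm.const_add 1).analyticOnNhd hopen)
    (convex_halfSpace_re_gt 0).isPreconnected (z₀ := 2) (by simp) ?_ hs
  filter_upwards [(isOpen_lt continuous_const continuous_re).mem_nhds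
    (show (2 : ℂ) ∈ {s : ℂ | 1 < s.re} by simp)] with z hz
  exact riemannZeta₁_eq_one_add_tsum_of_one_lt_re hz

lemma norm_riemannZeta₁_le_of_truncation {a : ℝ} (ha₀ : 0 < a) (ha₁ : a < 1) {s : ℂ}
    (hs : a ≤ s.re) {N : ℕ} (hN : N ≠ 0) :
    ‖riemannZeta₁ s‖ ≤ ‖s - 1‖ * ((N : ℝ) ^ (1 - a) / (1 - a)) + ((N : ℝ) + 1) ^ (1 - a) +
      ‖s - 1‖ * ‖s‖ * ((N : ℝ) ^ (-a) / a) := by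
  have hs₀ : 0 < s.re := ha₀.trans_le hs
  have hsplit : riemannZeta₁ s = (s - 1) * ∑ n ∈ range N, ((n : ℂ) + 1) ^ (-s) +
      ((N : ℂ) + 1) ^ (1 - s) + ∑' n, zetaTerm (n + N) s := by
    rw [riemannZeta₁_eq_one_add_tsum hs₀, ← (summable_zetaTerm hs₀).sum_add_tsum_nat_add N,
      sum_range_zetaTerm]
    ring
  have hpow (n : ℕ) {x : ℂ} {y : ℝ} (hxy : x.re ≤ y) :
      ‖((n : ℂ) + 1) ^ x‖ ≤ ((n : ℝ) + 1) ^ y := by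
    rw [norm_natCast_add_one_cpow]
    exact Real.rpow_le_rpow_of_exponent_le (by simp) hxy
  rw [hsplit]
  refine norm_add₃_le.trans (add_le_add_three ?main ?boundary ?tail)
  case main =>
    rw [norm_mul]
    gcongr
    exact (norm_sum_le_of_le _ fun n _ => hpow n (by simpa using hs)).trans
      (sum_range_add_one_rpow_neg_le ha₀.le ha₁ N)
  case boundary => exact hpow N (by simpa only [sub_re, one_re] using sub_le_sub_left hs 1)
  case tail =>
    have hsum := ((summable_nat_add_iff N).mpr (summable_add_one_rpow_neg ha₀)).mul_left
      (‖s - 1‖ * ‖s‖)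
    refine (tsum_of_norm_bounded hsum.hasSum
      fun n => norm_zetaTerm_le_of_le_re (n + N) (by linarith) hs).trans ?_
    rw [tsum_mul_left]
    gcongr
    exact tsum_add_one_rpow_neg_le ha₀ hN

lemma exists_norm_riemannZeta₁_le_rpow {a b : ℝ} (ha₀ : 0 < a) (ha₁ : a < 1) :
    ∃ K : ℝ, ∀ s : ℂ, a ≤ s.re → s.re ≤ b → 1 ≤ |s.im| →
      ‖riemannZeta₁ s‖ ≤ K * (‖s - 1‖ * |s.im| ^ (1 - a)) := by
  have : 0 < 1 - a := sub_pos.mpr ha₁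
  refine ⟨2 ^ (1 - a) / (1 - a) + 3 ^ (1 - a) + (b + 1) / a, fun s hsa hsb ht => ?_⟩
  set t := |s.im|
  have ht₀ : 0 < t := one_pos.trans_le ht
  have hNt : t ≤ ⌈t⌉₊ := Nat.le_ceil t
  have hN2t : (⌈t⌉₊ : ℝ) ≤ 2 * t := by linarith [Nat.ceil_lt_add_one ht₀.le]
  have hN : ⌈t⌉₊ ≠ 0 := (Nat.ceil_pos.mpr ht₀).ne'
  have hs1 : t ≤ ‖s - 1‖ := by simpa using abs_im_le_norm (s - 1)
  have hs : ‖s‖ ≤ (b + 1) * t := by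
    have := norm_le_abs_re_add_abs_im s
    rw [abs_of_nonneg (ha₀.le.trans hsa)] at this
    nlinarith
  have hmain : (⌈t⌉₊ : ℝ) ^ (1 - a) ≤ 2 ^ (1 - a) * t ^ (1 - a) := by
    rw [← Real.mul_rpow zero_le_two ht₀.le]
    gcongr
  have hboundary : ((⌈t⌉₊ : ℝ) + 1) ^ (1 - a) ≤ ‖s - 1‖ * (3 ^ (1 - a) * t ^ (1 - a)) := by
    rw [← Real.mul_rpow zero_le_three ht₀.le]
    refine le_trans ?_ (le_mul_of_one_le_left (by positivity) (ht.trans hs1))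
    gcongr
    linarith
  have htail : ‖s‖ * (⌈t⌉₊ : ℝ) ^ (-a) ≤ (b + 1) * t ^ (1 - a) := by
    calc ‖s‖ * (⌈t⌉₊ : ℝ) ^ (-a) ≤ (b + 1) * t * t ^ (-a) :=
          mul_le_mul hs (Real.rpow_le_rpow_of_nonpos ht₀ hNt (by linarith)) (by positivity)
            ((norm_nonneg s).trans hs)
      _ = (b + 1) * t ^ (1 - a) := by
          rw [mul_assoc, ← Real.rpow_one_add' ht₀.le (by linarith)]
          ring_nf
  calc ‖riemannZeta₁ s‖
      ≤ ‖s - 1‖ * ((⌈t⌉₊ : ℝ) ^ (1 - a) / (1 - a)) + ((⌈t⌉₊ : ℝ) + 1) ^ (1 - a) +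
          ‖s - 1‖ * (‖s‖ * (⌈t⌉₊ : ℝ) ^ (-a) / a) :=
        (norm_riemannZeta₁_le_of_truncation ha₀ ha₁ hsa hN).trans_eq (by ring)
    _ ≤ ‖s - 1‖ * (2 ^ (1 - a) * t ^ (1 - a) / (1 - a)) + ‖s - 1‖ * (3 ^ (1 - a) * t ^ (1 - a)) +
          ‖s - 1‖ * ((b + 1) * t ^ (1 - a) / a) := by gcongr
    _ = _ := by ring

lemma exists_norm_riemannZeta₁_le {a b : ℝ} (ha : 0 < a) :
    ∃ K : ℝ, 1 ≤ K ∧ ∀ s : ℂ, a ≤ s.re → s.re ≤ b → ‖riemannZeta₁ s‖ ≤ K * (|s.im| + 3) ^ 2 := by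
  set S := ∑' n : ℕ, ((n : ℝ) + 1) ^ (-a - 1)
  have hS : 0 ≤ S := tsum_nonneg fun n => by positivity
  refine ⟨1 + S * (b + 1) ^ 2, by nlinarith [mul_nonneg hS (sq_nonneg (b + 1))],
    fun s hsa hsb => ?_⟩
  have hs₀ : 0 < s.re := ha.trans_le hsa
  have hs : ‖s‖ ≤ (b + 1) * (|s.im| + 3) := by
    have := norm_le_abs_re_add_abs_im s
    rw [abs_of_pos hs₀] at this
    nlinarith [abs_nonneg s.im]
  have hs1 : ‖s - 1‖ ≤ (b + 1) * (|s.im| + 3) := by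
    have := norm_le_abs_re_add_abs_im (s - 1)
    have hre : |(s - 1).re| ≤ b + 1 := by
      rw [sub_re, one_re, abs_le]
      constructor <;> linarith
    rw [sub_im, one_im, sub_zero] at this
    nlinarith [abs_nonneg s.im]
  have htsum : ‖∑' n, zetaTerm n s‖ ≤ ‖s - 1‖ * ‖s‖ * S :=
    tsum_of_norm_bounded ((summable_add_one_rpow_neg ha).hasSum.mul_left _)
      fun n => norm_zetaTerm_le_of_le_re n (by linarith) hsa
  calc ‖riemannZeta₁ s‖
      ≤ 1 + ‖s - 1‖ * ‖s‖ * S := by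
        rw [riemannZeta₁_eq_one_add_tsum hs₀]
        exact (norm_add_le _ _).trans (add_le_add norm_one.le htsum)
    _ ≤ (|s.im| + 3) ^ 2 + (b + 1) * (|s.im| + 3) * ((b + 1) * (|s.im| + 3)) * S := by
        gcongr
        · nlinarith [abs_nonneg s.im]
        · exact (norm_nonneg _).trans hs1
    _ = (1 + S * (b + 1) ^ 2) * (|s.im| + 3) ^ 2 := by ring

lemma exists_le_norm_riemannZeta₁ {σ : ℝ} (hσ : 1 < σ) :
    ∃ k > 0, ∀ s : ℂ, σ ≤ s.re → k ≤ ‖riemannZeta₁ s‖ := by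
  set B := ∑' n : ℕ, (n : ℝ) ^ (-σ)
  have hB : Summable fun n : ℕ => (n : ℝ) ^ (-σ) := Real.summable_nat_rpow.mpr (by linarith)
  have hmoebius {s : ℂ} (hs : σ ≤ s.re) :
      ‖LSeries (fun n => (ArithmeticFunction.moebius n : ℂ)) s‖ ≤ B := by
    refine tsum_of_norm_bounded hB.hasSum fun n => ?_
    rcases n.eq_zero_or_pos with rfl | hn
    · simpa using by positivity
    have hμ : ‖(ArithmeticFunction.moebius n : ℂ)‖ ≤ 1 := by
      rw [norm_intCast]
      exact_mod_cast ArithmeticFunction.abs_moebius_le_one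
    rw [LSeries.term_of_ne_zero hn.ne', norm_div, norm_natCast_cpow_of_pos hn,
      Real.rpow_neg n.cast_nonneg, ← one_div]
    gcongr
    exact_mod_cast hn
  have hB₀ : 0 < B := hB.tsum_pos (fun n => by positivity) 1 (by simp)
  refine ⟨(σ - 1) / B, div_pos (sub_pos.mpr hσ) hB₀, fun s hs => ?_⟩
  have hs₁ : 1 < s.re := hσ.trans_le hs
  have hinv : ‖riemannZeta s‖ * ‖LSeries (fun n => (ArithmeticFunction.moebius n : ℂ)) s‖ = 1 := by
    rw [← norm_mul, ← LSeries_one_eq_riemannZeta hs₁, LSeries_one_mul_Lseries_moebius hs₁, norm_one]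
  have hzeta : 1 ≤ ‖riemannZeta s‖ * B :=
    hinv.ge.trans (mul_le_mul_of_nonneg_left (hmoebius hs) (norm_nonneg _))
  have hs1 : σ - 1 ≤ ‖s - 1‖ := by
    have := re_le_norm (s - 1)
    simp only [sub_re, one_re] at this
    linarith
  rw [riemannZeta₁_eq_sub_mul (ne_one_of_one_lt_re hs₁), norm_mul, div_le_iff₀ hB₀, mul_assoc]
  exact hs1.trans (le_mul_of_one_le_right (norm_nonneg _) hzeta)

/-! ### Logarithmic derivatives and zeros in a disc -/

lemma pow_card_le_norm_prod_sub {S : Multiset ℂ} {z : ℂ} {a : ℝ} (ha : 0 ≤ a)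
    (h : ∀ ρ ∈ S, a ≤ ‖z - ρ‖) : a ^ S.card ≤ ‖(S.map (z - ·)).prod‖ := by
  induction S using Multiset.induction_on with
  | empty => simp
  | cons ρ S ih =>
    rw [Multiset.map_cons, Multiset.prod_cons, norm_mul, Multiset.card_cons, pow_succ']
    exact mul_le_mul (h ρ (S.mem_cons_self ρ))
      (ih fun σ hσ => h σ (Multiset.mem_cons_of_mem hσ)) (by positivity) (norm_nonneg _)

lemma norm_prod_sub_le_pow_card {S : Multiset ℂ} {z : ℂ} {a : ℝ}
    (h : ∀ ρ ∈ S, ‖z - ρ‖ ≤ a) : ‖(S.map (z - ·)).prod‖ ≤ a ^ S.card := by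
  induction S using Multiset.induction_on with
  | empty => simp
  | cons ρ S ih =>
    have hρ := h ρ (S.mem_cons_self ρ)
    rw [Multiset.map_cons, Multiset.prod_cons, norm_mul, Multiset.card_cons, pow_succ']
    exact mul_le_mul hρ (ih fun σ hσ => h σ (Multiset.mem_cons_of_mem hσ)) (norm_nonneg _)
      ((norm_nonneg _).trans hρ)

lemma prod_sub_eq_zero_iff {S : Multiset ℂ} {z : ℂ} : (S.map (z - ·)).prod = 0 ↔ z ∈ S := by
  simp [Multiset.prod_eq_zero_iff, sub_eq_zero]

lemma hasDerivAt_prod_sub {S : Multiset ℂ} {z : ℂ} (hz : z ∉ S) :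
    HasDerivAt (fun w => (S.map (w - ·)).prod)
      ((S.map fun ρ => 1 / (z - ρ)).sum * (S.map (z - ·)).prod) z := by
  induction S using Multiset.induction_on with
  | empty => simpa using hasDerivAt_const z (1 : ℂ)
  | cons ρ S ih =>
    rw [Multiset.mem_cons, not_or] at hz
    simp only [Multiset.map_cons, Multiset.prod_cons, Multiset.sum_cons]
    refine (((hasDerivAt_id z).sub_const ρ).mul (ih hz.2)).congr_deriv ?_
    have := sub_ne_zero.mpr hz.1
    simp only [id_eq]
    field_simp

/-- `f` is the product of the monic polynomial with root multiset `S` and a function `g`,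
holomorphic on the disc of radius `R` about `c`; the roots are confined to the concentric disc of
radius `R / 3`, but `g` may still vanish there. -/
structure ZeroFactorization (f : ℂ → ℂ) (c : ℂ) (R : ℝ) (S : Multiset ℂ) (g : ℂ → ℂ) : Prop where
  diffContOnCl : DiffContOnCl ℂ g (Metric.ball c R)
  mem_closedBall : ∀ ρ ∈ S, ρ ∈ Metric.closedBall c (R / 3)
  eq_mul : ∀ z ∈ Metric.closedBall c R, f z = (S.map (z - ·)).prod * g z

namespace ZeroFactorization

variable {f g : ℂ → ℂ} {c : ℂ} {R B : ℝ} {S : Multiset ℂ}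

lemma norm_quotient_le (h : ZeroFactorization f c R S g) (hR : 0 < R)
    (hB : ∀ z ∈ Metric.sphere c R, ‖f z‖ ≤ B) {z : ℂ} (hz : z ∈ Metric.closedBall c R) :
    ‖g z‖ ≤ B / (2 * R / 3) ^ S.card := by
  rw [← closure_ball c hR.ne'] at hz
  refine Complex.norm_le_of_forall_mem_frontier_norm_le Metric.isBounded_ball h.diffContOnCl
    (fun w hw => ?_) hz
  rw [frontier_ball c hR.ne'] at hw
  have hprod : (2 * R / 3) ^ S.card ≤ ‖(S.map (w - ·)).prod‖ :=
    pow_card_le_norm_prod_sub (by positivity) fun ρ hρ => by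
      have hρc := mem_closedBall_iff_norm.mp (h.mem_closedBall ρ hρ)
      have hwc := mem_sphere_iff_norm.mp hw
      have htri := norm_sub_norm_le (w - c) (ρ - c)
      rw [sub_sub_sub_cancel_right] at htri
      linarith
  rw [le_div_iff₀ (by positivity)]
  calc ‖g w‖ * (2 * R / 3) ^ S.card ≤ ‖g w‖ * ‖(S.map (w - ·)).prod‖ := by gcongr
    _ = ‖f w‖ := by rw [h.eq_mul w (Metric.sphere_subset_closedBall hw), norm_mul, mul_comm]
    _ ≤ B := hB w hw

lemma norm_center_le (h : ZeroFactorization f c R S g) (hR : 0 < R) :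
    ‖f c‖ ≤ (R / 3) ^ S.card * ‖g c‖ := by
  rw [h.eq_mul c (Metric.mem_closedBall_self hR.le), norm_mul]
  gcongr
  refine norm_prod_sub_le_pow_card fun ρ hρ => ?_
  rw [norm_sub_rev]
  exact mem_closedBall_iff_norm.mp (h.mem_closedBall ρ hρ)

lemma two_pow_card_mul_norm_mul_norm_le (h : ZeroFactorization f c R S g) (hR : 0 < R)
    (hB : ∀ z ∈ Metric.sphere c R, ‖f z‖ ≤ B) {z : ℂ} (hz : z ∈ Metric.closedBall c R) :
    2 ^ S.card * (‖g z‖ * ‖f c‖) ≤ B * ‖g c‖ := by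
  have hquot := h.norm_quotient_le hR hB hz
  rw [le_div_iff₀ (by positivity)] at hquot
  calc 2 ^ S.card * (‖g z‖ * ‖f c‖) ≤ 2 ^ S.card * (‖g z‖ * ((R / 3) ^ S.card * ‖g c‖)) := by
        gcongr
        exact h.norm_center_le hR
    _ = ‖g z‖ * (2 * R / 3) ^ S.card * ‖g c‖ := by
        rw [mul_div_assoc, mul_pow]
        ring
    _ ≤ B * ‖g c‖ := by gcongr

lemma quotient_center_ne_zero (h : ZeroFactorization f c R S g) (hR : 0 < R) (hf : f c ≠ 0) :
    g c ≠ 0 := fun hg =>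
  hf (by rw [h.eq_mul c (Metric.mem_closedBall_self hR.le), hg, mul_zero])

lemma two_pow_card_mul_norm_le (h : ZeroFactorization f c R S g) (hR : 0 < R) (hf : f c ≠ 0)
    (hB : ∀ z ∈ Metric.sphere c R, ‖f z‖ ≤ B) : 2 ^ S.card * ‖f c‖ ≤ B := by
  have hg : 0 < ‖g c‖ := norm_pos_iff.mpr (h.quotient_center_ne_zero hR hf)
  refine le_of_mul_le_mul_right ?_ hg
  linarith [h.two_pow_card_mul_norm_mul_norm_le hR hB (Metric.mem_closedBall_self hR.le)]

lemma cons (h : ZeroFactorization f c R S g) (hR : 0 < R) {ρ : ℂ}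
    (hρ : ρ ∈ Metric.closedBall c (R / 3)) (hg : g ρ = 0) :
    ZeroFactorization f c R (ρ ::ₘ S) (dslope g ρ) where
  diffContOnCl := by
    have hρR : ρ ∈ Metric.ball c R := Metric.closedBall_subset_ball (by linarith) hρ
    have hnhds := Metric.isOpen_ball.mem_nhds hρR
    refine ⟨(Complex.differentiableOn_dslope hnhds).mpr h.diffContOnCl.differentiableOn, ?_⟩
    exact (continuousOn_dslope (Filter.mem_of_superset hnhds subset_closure)).mpr
      ⟨h.diffContOnCl.continuousOn, h.diffContOnCl.differentiableAt Metric.isOpen_ball hρR⟩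
  mem_closedBall := Multiset.forall_mem_cons.mpr ⟨hρ, h.mem_closedBall⟩
  eq_mul z hz := by
    have hslope := sub_smul_dslope g ρ z
    rw [hg, sub_zero, smul_eq_mul] at hslope
    rw [h.eq_mul z hz, ← hslope, Multiset.map_cons, Multiset.prod_cons]
    ring

lemma logDeriv_eq (h : ZeroFactorization f c R S g) {z : ℂ} (hz : z ∈ Metric.ball c R)
    (hf : f z ≠ 0) : logDeriv f z = (S.map fun ρ => 1 / (z - ρ)).sum + logDeriv g z := by
  have heq : f =ᶠ[nhds z] fun w => (S.map (w - ·)).prod * g w :=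
    Filter.mem_of_superset (Metric.isOpen_ball.mem_nhds hz)
      fun w hw => h.eq_mul w (Metric.ball_subset_closedBall hw)
  have hne := heq.self_of_nhds ▸ hf
  have hzS : z ∉ S := prod_sub_eq_zero_iff.not.mp (left_ne_zero_of_mul hne)
  have hderiv := hasDerivAt_prod_sub hzS
  rw [logDeriv_apply, heq.deriv_eq, heq.self_of_nhds, ← logDeriv_apply (fun w => _ * g w),
    logDeriv_mul z (left_ne_zero_of_mul hne) (right_ne_zero_of_mul hne) hderiv.differentiableAt
      (h.diffContOnCl.differentiableAt Metric.isOpen_ball hz),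
    logDeriv_apply, hderiv.deriv, mul_div_cancel_right₀ _ (left_ne_zero_of_mul hne)]

end ZeroFactorization

lemma exists_zeroFactorization_forall_ne_zero {f : ℂ → ℂ} {c : ℂ} {R B : ℝ} (hR : 0 < R)
    (hd : DiffContOnCl ℂ f (Metric.ball c R)) (hf : f c ≠ 0)
    (hB : ∀ z ∈ Metric.sphere c R, ‖f z‖ ≤ B) :
    ∃ S g, ZeroFactorization f c R S g ∧ ∀ z ∈ Metric.closedBall c (R / 3), g z ≠ 0 := by
  classical
  let P : ℕ → Prop := fun k => ∃ S g, S.card = k ∧ ZeroFactorization f c R S g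
  have hP₀ : P 0 := ⟨0, f, Multiset.card_zero, hd, by simp, by simp⟩
  obtain ⟨m, hm⟩ := pow_unbounded_of_one_lt (B / ‖f c‖) one_lt_two
  have hbound (k : ℕ) : P k → k ≤ m := by
    rintro ⟨S, g, rfl, h⟩
    have hle := (le_div_iff₀ (norm_pos_iff.mpr hf)).mpr (h.two_pow_card_mul_norm_le hR hf hB)
    exact ((pow_lt_pow_iff_right₀ one_lt_two).mp (hle.trans_lt hm)).le
  obtain ⟨S, g, hS, h⟩ := Nat.findGreatest_spec (P := P) m.zero_le hP₀
  refine ⟨S, g, h, fun ρ hρ hg => ?_⟩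
  have hlarger : P (Nat.findGreatest P m + 1) :=
    ⟨ρ ::ₘ S, dslope g ρ, by rw [Multiset.card_cons, hS], h.cons hR hρ hg⟩
  exact (Nat.lt_succ_self _).not_ge (Nat.le_findGreatest (hbound _ hlarger) hlarger)

lemma exists_eq_mul_exp_of_forall_ne_zero {g : ℂ → ℂ} {c : ℂ} {r : ℝ}
    (hg : DifferentiableOn ℂ g (Metric.ball c r)) (hne : ∀ z ∈ Metric.ball c r, g z ≠ 0) :
    ∃ h : ℂ → ℂ, h c = 0 ∧ (∀ z ∈ Metric.ball c r, HasDerivAt h (logDeriv g z) z) ∧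
      ∀ z ∈ Metric.ball c r, g z = g c * exp (h z) := by
  have hlog : DifferentiableOn ℂ (logDeriv g) (Metric.ball c r) :=
    (hg.deriv Metric.isOpen_ball).div hg hne
  obtain ⟨h₀, hh₀⟩ := hlog.isExactOn_ball
  have hderiv (z) (hz : z ∈ Metric.ball c r) : HasDerivAt (fun w => h₀ w - h₀ c) (logDeriv g z) z :=
    (hh₀ z hz).sub_const _
  refine ⟨fun z => h₀ z - h₀ c, sub_self _, hderiv, fun z hz => ?_⟩
  have hconst (w) (hw : w ∈ Metric.ball c r) :
      HasDerivWithinAt (fun w => g w * exp (-(h₀ w - h₀ c))) 0 (Metric.ball c r) w := by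
    have hgw := (hg.differentiableAt (Metric.isOpen_ball.mem_nhds hw)).hasDerivAt
    refine ((hgw.mul (hderiv w hw).neg.cexp).congr_deriv ?_).hasDerivWithinAt
    rw [logDeriv_apply]
    field_simp [hne w hw]
    ring
  have heq := (convex_ball c r).norm_image_sub_le_of_norm_hasDerivWithin_le hconst (C := 0)
    (by simp) (Metric.mem_ball_self (Metric.pos_of_mem_ball hz)) hz
  rw [zero_mul, norm_le_zero_iff, sub_eq_zero, sub_self, neg_zero, exp_zero, mul_one] at heq
  rw [← heq, mul_assoc, ← exp_add, neg_add_cancel, exp_zero, mul_one]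

lemma norm_logDeriv_le_of_forall_ne_zero {g : ℂ → ℂ} {c : ℂ} {r M : ℝ} (hM : 0 < M) (hr : 0 < r)
    (hg : DifferentiableOn ℂ g (Metric.ball c r)) (hne : ∀ z ∈ Metric.ball c r, g z ≠ 0)
    (hbound : ∀ z ∈ Metric.ball c r, ‖g z‖ ≤ Real.exp M * ‖g c‖) {z : ℂ}
    (hz : z ∈ Metric.closedBall c (r / 2)) : ‖logDeriv g z‖ ≤ 24 * M / r := by
  obtain ⟨h, hc, hderiv, hexp⟩ := exists_eq_mul_exp_of_forall_ne_zero hg hne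
  have hgc : 0 < ‖g c‖ := norm_pos_iff.mpr (hne c (Metric.mem_ball_self hr))
  have hshift {w : ℂ} (hw : w ∈ Metric.ball 0 r) : c + w ∈ Metric.ball c r := by simpa using hw
  have hdiff : DifferentiableOn ℂ (fun w => h (c + w)) (Metric.ball 0 r) := fun w hw =>
    ((hderiv _ (hshift hw)).comp_const_add c w).differentiableAt.differentiableWithinAt
  have hre : Set.MapsTo (fun w => h (c + w)) (Metric.ball 0 r) {w | w.re ≤ M} := by
    intro w hw
    have hle := hbound _ (hshift hw)
    rw [hexp _ (hshift hw), norm_mul, norm_exp, mul_comm] at hle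
    exact Real.exp_le_exp.mp (le_of_mul_le_mul_right hle hgc)
  have hcaratheodory {w : ℂ} (hw : ‖w - c‖ ≤ 3 * r / 4) : ‖h w‖ ≤ 6 * M := by
    have := borelCaratheodory_zero (z := w - c) hM hdiff hre hr
      (mem_ball_zero_iff.mpr (by linarith)) (by rw [add_zero, hc])
    rw [add_sub_cancel] at this
    refine this.trans ((div_le_iff₀ (by linarith)).mpr ?_)
    nlinarith
  rw [mem_closedBall_iff_norm] at hz
  have htri (w : ℂ) : ‖w - c‖ ≤ ‖w - z‖ + ‖z - c‖ := norm_sub_le_norm_sub_add_norm_sub w z c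
  have hcauchy : ‖deriv h z‖ ≤ 6 * M / (r / 4) := by
    refine norm_deriv_le_of_forall_mem_sphere_norm_le (by positivity)
      (DifferentiableOn.diffContOnCl fun w hw => ?_) fun w hw => hcaratheodory ?_
    · refine (hderiv w (mem_ball_iff_norm.mpr ?_)).differentiableAt.differentiableWithinAt
      rw [closure_ball z (by positivity), mem_closedBall_iff_norm] at hw
      linarith [htri w]
    · linarith [htri w, mem_sphere_iff_norm.mp hw]
  rw [(hderiv z (mem_ball_iff_norm.mpr (by linarith))).deriv] at hcauchy
  exact hcauchy.trans_eq (by field_simp; norm_num)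

/-- Landau's lemma: divide out the zeros in the middle disc and take the logarithm of the quotient,
which Borel–Carathéodory bounds by its real part. -/
theorem exists_multiset_zeros_norm_logDeriv_sub_le {f : ℂ → ℂ} {c : ℂ} {R M : ℝ} (hR : 0 < R)
    (hM : 0 < M) (hd : DiffContOnCl ℂ f (Metric.ball c R)) (hf : f c ≠ 0)
    (hbound : ∀ z ∈ Metric.sphere c R, ‖f z‖ ≤ Real.exp M * ‖f c‖) :
    ∃ S : Multiset ℂ, (∀ ρ, ρ ∈ S ↔ ρ ∈ Metric.closedBall c (R / 3) ∧ f ρ = 0) ∧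
      S.card * Real.log 2 ≤ M ∧ ∀ z ∈ Metric.closedBall c (R / 6), f z ≠ 0 →
        ‖logDeriv f z - (S.map fun ρ => 1 / (z - ρ)).sum‖ ≤ 72 * M / R := by
  obtain ⟨S, g, h, hg⟩ := exists_zeroFactorization_forall_ne_zero hR hd hf hbound
  have hfc : 0 < ‖f c‖ := norm_pos_iff.mpr hf
  have hsub : Metric.closedBall c (R / 3) ⊆ Metric.ball c R :=
    Metric.closedBall_subset_ball (by linarith)
  refine ⟨S, fun ρ => ⟨fun hρ => ⟨h.mem_closedBall ρ hρ, ?_⟩, fun ⟨hρ, hf₀⟩ => ?_⟩, ?_,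
    fun z hz hfz => ?_⟩
  · rw [h.eq_mul ρ (Metric.ball_subset_closedBall (hsub (h.mem_closedBall ρ hρ))),
      prod_sub_eq_zero_iff.mpr hρ, zero_mul]
  · rw [h.eq_mul ρ (Metric.ball_subset_closedBall (hsub hρ)), mul_eq_zero] at hf₀
    exact prod_sub_eq_zero_iff.mp (hf₀.resolve_right (hg ρ hρ))
  · have hcard := le_of_mul_le_mul_right (h.two_pow_card_mul_norm_le hR hf hbound) hfc
    rw [← Real.log_exp M, ← Real.log_pow]
    exact Real.log_le_log (by positivity) hcard
  · have hquot (w) (hw : w ∈ Metric.ball c (R / 3)) : ‖g w‖ ≤ Real.exp M * ‖g c‖ := by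
      have hle := h.two_pow_card_mul_norm_mul_norm_le hR hbound
        (Metric.ball_subset_closedBall (hsub (Metric.ball_subset_closedBall hw)))
      have hpow : (1 : ℝ) ≤ 2 ^ S.card := one_le_pow₀ one_le_two
      refine le_of_mul_le_mul_right ?_ hfc
      nlinarith [mul_nonneg (norm_nonneg (g w)) hfc.le]
    have hzR : z ∈ Metric.ball c R := Metric.closedBall_subset_ball (by linarith) hz
    rw [h.logDeriv_eq hzR hfz, add_sub_cancel_left]
    refine (norm_logDeriv_le_of_forall_ne_zero hM (by positivity)
      (h.diffContOnCl.differentiableOn.mono (Metric.ball_subset_closedBall.trans hsub))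
      (fun w hw => hg w (Metric.ball_subset_closedBall hw)) hquot
      (by rwa [div_div, show (3 : ℝ) * 2 = 6 by norm_num])).trans_eq ?_
    field_simp
    norm_num

/-! ### The zero-free region -/

/-- The quantity `log (|t| + 3)`, which measures growth at height `t`; the shift keeps it at
least `1`. -/
noncomputable def logHeight (t : ℝ) : ℝ := Real.log (|t| + 3)

lemma one_le_logHeight (t : ℝ) : 1 ≤ logHeight t := by
  rw [logHeight, Real.le_log_iff_exp_le (by positivity)]
  linarith [Real.exp_one_lt_d9, abs_nonneg t]

lemma logHeight_pos (t : ℝ) : 0 < logHeight t := zero_lt_one.trans_le (one_le_logHeight t)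

lemma logHeight_zero_le (t : ℝ) : logHeight 0 ≤ logHeight t :=
  Real.log_le_log (by simp) (by simp)

lemma logHeight_le_two_mul {t u : ℝ} (h : |u| + 3 ≤ (|t| + 3) ^ 2) :
    logHeight u ≤ 2 * logHeight t := by
  simpa only [logHeight, Real.log_pow, Nat.cast_ofNat] using Real.log_le_log (by positivity) h

lemma riemannZeta₁_ne_zero_of_one_le_re {s : ℂ} (hs : 1 ≤ s.re) : riemannZeta₁ s ≠ 0 := by
  rcases eq_or_ne s 1 with rfl | h
  · simp
  · rw [riemannZeta₁_eq_sub_mul h]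
    exact mul_ne_zero (sub_ne_zero.mpr h) (riemannZeta_ne_zero_of_one_le_re hs)

lemma re_lt_one_of_riemannZeta₁_eq_zero {s : ℂ} (h : riemannZeta₁ s = 0) : s.re < 1 :=
  not_le.mp fun hs => riemannZeta₁_ne_zero_of_one_le_re hs h

lemma logDeriv_riemannZeta {s : ℂ} (hs : s ≠ 1) (h₀ : riemannZeta₁ s ≠ 0) :
    logDeriv riemannZeta s = logDeriv riemannZeta₁ s - 1 / (s - 1) := by
  have hs' : s - 1 ≠ 0 := sub_ne_zero.mpr hs
  have hev : riemannZeta =ᶠ[nhds s] fun z => riemannZeta₁ z / (z - 1) := by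
    filter_upwards [isOpen_ne.mem_nhds hs] with z hz
    rw [riemannZeta_eq_inv_sub_mul hz, div_eq_inv_mul]
  rw [(logDeriv_congr_nhds hev).eq_of_nhds,
    logDeriv_div s h₀ hs' (differentiable_riemannZeta₁ s) (by fun_prop)]
  simp [logDeriv_apply]

/-- The point at height `t` around which the zeros near the line `Re s = 1` are collected; it is far
enough to the right for `ζ` to be bounded below there. -/
noncomputable def landauCenter (t : ℝ) : ℂ := 17 / 16 + t * I

@[simp] lemma landauCenter_re (t : ℝ) : (landauCenter t).re = 17 / 16 := by simp [landauCenter]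

@[simp] lemma landauCenter_im (t : ℝ) : (landauCenter t).im = t := by simp [landauCenter]

lemma mem_closedBall_landauCenter {s : ℂ} {r : ℝ} :
    s ∈ Metric.closedBall (landauCenter s.im) r ↔ |s.re - 17 / 16| ≤ r := by
  have : s - landauCenter s.im = ((s.re - 17 / 16 : ℝ) : ℂ) := by
    apply Complex.ext <;> simp
  rw [mem_closedBall_iff_norm, this, norm_real, Real.norm_eq_abs]

lemma exists_norm_riemannZeta₁_le_exp_mul_landauCenter :
    ∃ M > 0, ∀ t : ℝ, ∀ z ∈ Metric.sphere (landauCenter t) (1 / 2),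
      ‖riemannZeta₁ z‖ ≤ Real.exp (M * logHeight t) * ‖riemannZeta₁ (landauCenter t)‖ := by
  obtain ⟨K, hK₁, hK⟩ := exists_norm_riemannZeta₁_le (a := 9 / 16) (b := 25 / 16) (by norm_num)
  obtain ⟨k, hk₀, hk⟩ := exists_le_norm_riemannZeta₁ (σ := 17 / 16) (by norm_num)
  refine ⟨|Real.log (K / k)| + 4, by positivity, fun t z hz => ?_⟩
  have hnorm : ‖z - landauCenter t‖ = 1 / 2 := mem_sphere_iff_norm.mp hz
  have hre := abs_le.mp ((abs_re_le_norm _).trans_eq hnorm)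
  have him := (abs_im_le_norm _).trans_eq hnorm
  simp only [sub_re, landauCenter_re, sub_im, landauCenter_im] at hre him
  have hheight : |z.im| + 3 ≤ (|t| + 3) ^ 2 := by
    nlinarith [abs_sub_abs_le_abs_sub z.im t, abs_nonneg t]
  have hexp : K / k * (|z.im| + 3) ^ 2 ≤ Real.exp ((|Real.log (K / k)| + 4) * logHeight t) := by
    rw [← Real.log_le_iff_le_exp (by positivity), Real.log_mul (by positivity) (by positivity),
      Real.log_pow, add_mul]
    have := logHeight_le_two_mul hheight
    have := le_mul_of_one_le_right (abs_nonneg (Real.log (K / k))) (one_le_logHeight t)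
    have := le_abs_self (Real.log (K / k))
    push_cast
    simp only [logHeight] at *
    linarith
  calc ‖riemannZeta₁ z‖ ≤ K * (|z.im| + 3) ^ 2 := hK z (by linarith) (by linarith)
    _ = K / k * (|z.im| + 3) ^ 2 * k := by field_simp
    _ ≤ _ := by gcongr; exact hk _ (landauCenter_re t).ge

lemma exists_multiset_zeros_norm_logDeriv_riemannZeta₁_sub_le :
    ∃ C : ℝ, 1 ≤ C ∧ ∀ t : ℝ, ∃ S : Multiset ℂ,
      (∀ ρ, ρ ∈ S ↔ ρ ∈ Metric.closedBall (landauCenter t) (1 / 6) ∧ riemannZeta₁ ρ = 0) ∧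
      S.card ≤ C * logHeight t ∧
      ∀ z ∈ Metric.closedBall (landauCenter t) (1 / 12), riemannZeta₁ z ≠ 0 →
        ‖logDeriv riemannZeta₁ z - (S.map fun ρ => 1 / (z - ρ)).sum‖ ≤ C * logHeight t := by
  obtain ⟨M, hM₀, hM⟩ := exists_norm_riemannZeta₁_le_exp_mul_landauCenter
  refine ⟨144 * M + 1, by linarith, fun t => ?_⟩
  have hL := logHeight_pos t
  obtain ⟨S, hmem, hcard, happrox⟩ := exists_multiset_zeros_norm_logDeriv_sub_le
    (f := riemannZeta₁) (by norm_num) (by positivity) differentiable_riemannZeta₁.diffContOnCl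
    (riemannZeta₁_ne_zero_of_one_le_re (by norm_num)) (hM t)
  norm_num only at hmem happrox
  have hML : 0 < M * logHeight t := by positivity
  refine ⟨S, hmem, ?_, fun z hz hz₀ => (happrox z hz hz₀).trans (by linarith)⟩
  nlinarith [Real.log_two_gt_d9, S.card.cast_nonneg (α := ℝ)]

lemma re_one_div_sub_nonneg {z ρ : ℂ} (h : ρ.re ≤ z.re) : 0 ≤ (1 / (z - ρ)).re := by
  rw [one_div, inv_re]
  exact div_nonneg (by simpa using h) (normSq_nonneg _)

/-- Every zero of `ζ` contributes a nonnegative amount to `Re (ζ'/ζ)(s)` when `Re s > 1`, so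
all of them, or all but one, may be discarded. -/
theorem exists_le_re_logDeriv_riemannZeta₁ :
    ∃ C : ℝ, 1 ≤ C ∧ ∀ s : ℂ, 1 < s.re → s.re ≤ 9 / 8 →
      -(C * logHeight s.im) ≤ (logDeriv riemannZeta₁ s).re ∧
      ∀ ρ : ℂ, ρ.im = s.im → 15 / 16 ≤ ρ.re → riemannZeta₁ ρ = 0 →
        1 / (s.re - ρ.re) - C * logHeight s.im ≤ (logDeriv riemannZeta₁ s).re := by
  obtain ⟨C, hC, h⟩ := exists_multiset_zeros_norm_logDeriv_riemannZeta₁_sub_le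
  refine ⟨C, hC, fun s hs₁ hs₂ => ?_⟩
  obtain ⟨S, hmem, -, happrox⟩ := h s.im
  have hsum : (S.map fun ρ => 1 / (s - ρ)).sum.re = (S.map fun ρ => (1 / (s - ρ)).re).sum := by
    rw [← reCLM_apply, map_multiset_sum, Multiset.map_map]
    rfl
  have hre := (abs_re_le_norm _).trans (happrox s
    (mem_closedBall_landauCenter.mpr (abs_le.mpr ⟨by linarith, by linarith⟩))
    (riemannZeta₁_ne_zero_of_one_le_re hs₁.le))
  rw [sub_re, hsum] at hre
  have hterm : ∀ x ∈ S.map fun ρ => (1 / (s - ρ)).re, 0 ≤ x :=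
    Multiset.forall_mem_map_iff.mpr fun ρ hρ =>
      re_one_div_sub_nonneg ((re_lt_one_of_riemannZeta₁_eq_zero ((hmem ρ).mp hρ).2).trans hs₁).le
  refine ⟨by linarith [(abs_le.mp hre).1, Multiset.sum_nonneg hterm], fun ρ him hρ hρ₀ => ?_⟩
  have hρ₁ := re_lt_one_of_riemannZeta₁_eq_zero hρ₀
  have hρS : ρ ∈ S := (hmem ρ).mpr
    ⟨him ▸ mem_closedBall_landauCenter.mpr (abs_le.mpr ⟨by linarith, by linarith⟩), hρ₀⟩
  have hsub : s - ρ = ((s.re - ρ.re : ℝ) : ℂ) := Complex.ext (by simp) (by simp [him])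
  have hsingle : (1 / (s - ρ)).re = 1 / (s.re - ρ.re) := by
    rw [hsub, ← ofReal_one, ← ofReal_div, ofReal_re]
  have := Multiset.single_le_sum hterm _ (Multiset.mem_map_of_mem _ hρS)
  linarith [(abs_le.mp hre).1]

lemma re_three_add_four_mul_add_sq_nonneg {a : ℂ} (ha : ‖a‖ = 1) :
    0 ≤ (3 + 4 * a + a ^ 2).re := by
  have hsq : a.re * a.re + a.im * a.im = 1 := by
    rw [← normSq_apply, normSq_eq_norm_sq, ha, one_pow]
  have : (3 + 4 * a + a ^ 2).re = 2 * (a.re + 1) ^ 2 := by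
    simp only [add_re, mul_re, re_ofNat, im_ofNat, pow_two]
    linear_combination -hsq
  rw [this]
  positivity

open ArithmeticFunction in
lemma hasSum_term_vonMangoldt {s : ℂ} (hs : 1 < s.re) :
    HasSum (LSeries.term (fun n => (vonMangoldt n : ℂ)) s) (-logDeriv riemannZeta s) := by
  rw [logDeriv_apply, ← neg_div, ← LSeries_vonMangoldt_eq_deriv_riemannZeta_div hs]
  exact (LSeriesSummable_vonMangoldt hs).LSeriesHasSum

open ArithmeticFunction in
lemma re_three_term_vonMangoldt_nonneg (σ t : ℝ) (n : ℕ) :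
    0 ≤ (3 * LSeries.term (fun n => (vonMangoldt n : ℂ)) σ n +
      4 * LSeries.term (fun n => (vonMangoldt n : ℂ)) (σ + t * I) n +
      LSeries.term (fun n => (vonMangoldt n : ℂ)) (σ + 2 * t * I) n).re := by
  rcases eq_or_ne n 0 with rfl | hn
  · simp
  have hn' : (n : ℂ) ≠ 0 := Nat.cast_ne_zero.mpr hn
  set a : ℂ := (n : ℂ) ^ (-(t * I)) with ha
  have hnorm : ‖a‖ = 1 := by
    rw [norm_natCast_cpow_of_pos (Nat.pos_of_ne_zero hn)]
    simp
  have hone : (n : ℂ) ^ (σ + t * I) = (n : ℂ) ^ (σ : ℂ) * a⁻¹ := by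
    rw [cpow_add _ _ hn', ha, cpow_neg, inv_inv]
  have htwo : (n : ℂ) ^ (σ + 2 * t * I) = (n : ℂ) ^ (σ : ℂ) * (a⁻¹) ^ 2 := by
    rw [cpow_add _ _ hn', ha, cpow_neg, inv_inv, ← cpow_nat_mul]
    push_cast
    ring_nf
  have hreal : (n : ℂ) ^ (σ : ℂ) = (((n : ℝ) ^ σ : ℝ) : ℂ) := by
    rw [ofReal_cpow n.cast_nonneg, ofReal_natCast]
  have hfactor : 3 * LSeries.term (fun n => (vonMangoldt n : ℂ)) σ n +
      4 * LSeries.term (fun n => (vonMangoldt n : ℂ)) (σ + t * I) n +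
      LSeries.term (fun n => (vonMangoldt n : ℂ)) (σ + 2 * t * I) n =
        ((vonMangoldt n / (n : ℝ) ^ σ : ℝ) : ℂ) * (3 + 4 * a + a ^ 2) := by
    simp only [LSeries.term_of_ne_zero hn, hone, htwo, hreal]
    push_cast
    field_simp
  rw [hfactor, re_ofReal_mul]
  exact mul_nonneg (div_nonneg vonMangoldt_nonneg (by positivity))
    (re_three_add_four_mul_add_sq_nonneg hnorm)

lemma re_three_mul_logDeriv_riemannZeta_nonpos {σ : ℝ} (hσ : 1 < σ) (t : ℝ) :
    3 * (logDeriv riemannZeta σ).re + 4 * (logDeriv riemannZeta (σ + t * I)).re +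
      (logDeriv riemannZeta (σ + 2 * t * I)).re ≤ 0 := by
  have hsum := (((hasSum_term_vonMangoldt (s := σ) (by simpa)).mul_left 3).add
    ((hasSum_term_vonMangoldt (s := σ + t * I) (by simpa)).mul_left 4)).add
    (hasSum_term_vonMangoldt (s := σ + 2 * t * I) (by simpa))
  have := (Complex.hasSum_re hsum).nonneg (re_three_term_vonMangoldt_nonneg σ t)
  simp only [mul_neg, add_re, neg_re, mul_re, re_ofNat, im_ofNat, zero_mul, sub_zero] at this
  linarith

lemma re_one_div_sub_one_le {s : ℂ} (hs : 1 < s.re) (him : 1 ≤ |s.im|) :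
    (1 / (s - 1)).re ≤ s.re - 1 := by
  have him' : 1 ≤ s.im ^ 2 := (one_le_sq_iff_one_le_abs _).mpr him
  rw [one_div, inv_re, normSq_apply]
  simp only [sub_re, one_re, sub_im, one_im, sub_zero]
  exact div_le_self (by linarith) (by nlinarith [sq_nonneg (s.re - 1)])

lemma re_three_mul_logDeriv_riemannZeta₁_le {σ t : ℝ} (hσ : 1 < σ) (ht : 1 ≤ |t|) :
    3 * (logDeriv riemannZeta₁ σ).re + 4 * (logDeriv riemannZeta₁ (σ + t * I)).re +
      (logDeriv riemannZeta₁ (σ + 2 * t * I)).re ≤ 3 / (σ - 1) + 5 * (σ - 1) := by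
  have hlog {s : ℂ} (hs : 1 < s.re) : (logDeriv riemannZeta s).re =
      (logDeriv riemannZeta₁ s).re - (1 / (s - 1)).re := by
    rw [logDeriv_riemannZeta (ne_one_of_one_lt_re hs) (riemannZeta₁_ne_zero_of_one_le_re hs.le),
      sub_re]
  have hpole : (1 / ((σ : ℂ) - 1)).re = 1 / (σ - 1) := by
    rw [← ofReal_one, ← ofReal_sub, ← ofReal_div, ofReal_re]
  have h341 := re_three_mul_logDeriv_riemannZeta_nonpos hσ t
  rw [hlog (by simpa), hlog (by simpa), hlog (by simpa), hpole] at h341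
  have hone : (1 / (σ + t * I - 1)).re ≤ σ - 1 := by
    simpa using re_one_div_sub_one_le (s := σ + t * I) (by simpa) (by simpa)
  have htwo : (1 / (σ + 2 * t * I - 1)).re ≤ σ - 1 := by
    simpa using re_one_div_sub_one_le (s := σ + 2 * t * I) (by simpa)
      (by simpa [abs_mul] using by linarith)
  rw [← mul_one_div 3]
  linarith

lemma exists_re_le_of_abs_im_le_one :
    ∃ η > 0, ∀ s : ℂ, |s.im| ≤ 1 → riemannZeta₁ s = 0 → s.re ≤ 1 - η := by
  set Z : Set ℂ := (Set.Icc 0 1 ×ℂ Set.Icc (-1) 1) ∩ {s | riemannZeta₁ s = 0}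
  have hZ : IsCompact Z := (isCompact_Icc.reProdIm isCompact_Icc).inter_right
    (isClosed_eq differentiable_riemannZeta₁.continuous continuous_const)
  obtain ⟨η, hη, hle⟩ := hZ.exists_forall_le' (f := fun s => 1 - s.re) (a := 0) (by fun_prop)
    fun s hs => sub_pos.mpr (re_lt_one_of_riemannZeta₁_eq_zero hs.2)
  refine ⟨min η 1, by positivity, fun s hs hs₀ => ?_⟩
  rcases le_total s.re 0 with hre | hre
  · linarith [min_le_right η 1]
  · have := hle s ⟨⟨⟨hre, (re_lt_one_of_riemannZeta₁_eq_zero hs₀).le⟩, abs_le.mp hs⟩, hs₀⟩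
    linarith [min_le_left η 1]

lemma exists_four_div_sub_re_le :
    ∃ C : ℝ, 1 ≤ C ∧ ∀ ρ : ℂ, riemannZeta₁ ρ = 0 → 1 ≤ |ρ.im| → 15 / 16 ≤ ρ.re →
      ∀ σ : ℝ, 1 < σ → σ ≤ 9 / 8 →
        4 / (σ - ρ.re) ≤ 3 / (σ - 1) + 5 * (σ - 1) + 9 * C * logHeight ρ.im := by
  obtain ⟨C, hC, h⟩ := exists_le_re_logDeriv_riemannZeta₁
  refine ⟨C, hC, fun ρ hρ₀ him hre σ hσ₁ hσ₂ => ?_⟩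
  have hreal : -(C * logHeight 0) ≤ (logDeriv riemannZeta₁ σ).re := by
    simpa using (h σ (by simpa) (by simpa)).1
  have hzero : 1 / (σ - ρ.re) - C * logHeight ρ.im ≤
      (logDeriv riemannZeta₁ (σ + ρ.im * I)).re := by
    simpa using (h (σ + ρ.im * I) (by simpa) (by simpa)).2 ρ (by simp) hre hρ₀
  have hdouble : -(C * logHeight (2 * ρ.im)) ≤
      (logDeriv riemannZeta₁ (σ + 2 * ρ.im * I)).re := by
    simpa using (h (σ + 2 * ρ.im * I) (by simpa) (by simpa)).1
  have h341 := re_three_mul_logDeriv_riemannZeta₁_le hσ₁ him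
  have hL₀ : C * logHeight 0 ≤ C * logHeight ρ.im := by gcongr; exact logHeight_zero_le _
  have hL₂ : C * logHeight (2 * ρ.im) ≤ C * (2 * logHeight ρ.im) := by
    gcongr
    exact logHeight_le_two_mul (by rw [abs_mul, abs_two]; nlinarith)
  rw [← mul_one_div 4]
  linarith

theorem exists_re_le_one_sub_div_logHeight :
    ∃ c : ℝ, 0 < c ∧ c ≤ 1 / 16 ∧
      ∀ ρ : ℂ, riemannZeta₁ ρ = 0 → ρ.re ≤ 1 - c / logHeight ρ.im := by
  obtain ⟨η, hη, hlow⟩ := exists_re_le_of_abs_im_le_one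
  obtain ⟨C, hC, hhigh⟩ := exists_four_div_sub_re_le
  set a : ℝ := 1 / (24 * C + 24) with ha
  have ha₀ : 0 < a := by positivity
  have ha₁ : a ≤ 1 / 48 := one_div_le_one_div_of_le (by norm_num) (by linarith)
  refine ⟨min (a / 7) η, by positivity, (min_le_left _ _).trans (by linarith), fun ρ hρ₀ => ?_⟩
  have hL := one_le_logHeight ρ.im
  have hdiv : min (a / 7) η / logHeight ρ.im ≤ min (a / 7) η := div_le_self (by positivity) hL
  rcases le_total |ρ.im| 1 with him | him
  · linarith [hlow ρ him hρ₀, min_le_right (a / 7) η]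
  rcases le_total ρ.re (15 / 16) with hre | hre
  · linarith [min_le_left (a / 7) η]
  set δ := a / logHeight ρ.im with hδ
  have hδ₀ : 0 < δ := by positivity
  have hδ₁ : δ ≤ 1 / 48 := (div_le_self ha₀.le hL).trans ha₁
  have hdist : 4 / (1 + δ - ρ.re) ≤ (7 / 2) / δ := by
    have hinv : 1 / (2 * δ) = (12 * C + 12) * logHeight ρ.im := by
      rw [hδ, ha]
      field_simp
      ring
    have hsplit : (7 / 2) / δ = 3 / δ + 1 / (2 * δ) := by field_simp; norm_num
    have := hhigh ρ hρ₀ him hre (1 + δ) (by linarith) (by linarith)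
    rw [add_sub_cancel_left] at this
    nlinarith
  have hpos : 0 < 1 + δ - ρ.re := by linarith [re_lt_one_of_riemannZeta₁_eq_zero hρ₀]
  rw [div_le_div_iff₀ hpos hδ₀] at hdist
  have : min (a / 7) η / logHeight ρ.im ≤ δ / 7 := by
    rw [hδ, div_right_comm a]
    exact div_le_div_of_nonneg_right (min_le_left (a / 7) η) (logHeight_pos _).le
  linarith

/-- A zero-free region of width `c / log (|t| + 3)` to the left of the line `Re s = 1`, with a
bound of size `B log (|t| + 3) ^ 2` for the logarithmic derivative of `(s - 1) ζ(s)` in it. -/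
def HasLogDerivBound (c B : ℝ) : Prop :=
  ∀ s : ℂ, 1 - c / logHeight s.im ≤ s.re → s.re ≤ 9 / 8 →
    riemannZeta₁ s ≠ 0 ∧ ‖logDeriv riemannZeta₁ s‖ ≤ B * logHeight s.im ^ 2

lemma le_norm_sub_of_re_le {c : ℝ} (hc : 0 < c) {s ρ : ℂ}
    (hs : 1 - c / 4 / logHeight s.im ≤ s.re) (hρ : ρ.re ≤ 1 - c / logHeight ρ.im)
    (him : |ρ.im - s.im| ≤ 1) : c / 4 / logHeight s.im ≤ ‖s - ρ‖ := by
  have hheight : logHeight ρ.im ≤ 2 * logHeight s.im :=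
    logHeight_le_two_mul (by nlinarith [abs_sub_abs_le_abs_sub ρ.im s.im, abs_nonneg s.im])
  have hhalf : c / (2 * logHeight s.im) ≤ c / logHeight ρ.im := by
    gcongr
    exact logHeight_pos _
  have heq : c / (2 * logHeight s.im) = 2 * (c / 4 / logHeight s.im) := by
    field_simp
    norm_num
  have hre := (le_abs_self _).trans (abs_re_le_norm (s - ρ))
  rw [sub_re] at hre
  linarith

lemma norm_sum_one_div_sub_le {S : Multiset ℂ} {z : ℂ} {r : ℝ} (hr : 0 < r)
    (h : ∀ ρ ∈ S, r ≤ ‖z - ρ‖) : ‖(S.map fun ρ => 1 / (z - ρ)).sum‖ ≤ S.card / r := by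
  refine (norm_multiset_sum_le _).trans ?_
  rw [Multiset.map_map]
  refine (Multiset.sum_le_card_nsmul _ (1 / r) ?_).trans_eq ?_
  · refine Multiset.forall_mem_map_iff.mpr fun ρ hρ => ?_
    rw [Function.comp_apply, norm_div, norm_one]
    exact one_div_le_one_div_of_le hr (h ρ hρ)
  · rw [Multiset.card_map, nsmul_eq_mul, mul_one_div]

theorem exists_hasLogDerivBound :
    ∃ c B : ℝ, 0 < c ∧ c ≤ 1 / 64 ∧ 0 < B ∧ HasLogDerivBound c B := by
  obtain ⟨c, hc₀, hc₁, hfree⟩ := exists_re_le_one_sub_div_logHeight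
  obtain ⟨C, hC, h⟩ := exists_multiset_zeros_norm_logDeriv_riemannZeta₁_sub_le
  refine ⟨c / 4, C + C / (c / 4), by positivity, by linarith, by positivity, fun s hs₁ hs₂ => ?_⟩
  have hL := one_le_logHeight s.im
  have hwidth : c / 4 / logHeight s.im ≤ c / 4 := div_le_self (by positivity) hL
  have hwidth₀ : 0 < c / 4 / logHeight s.im := by positivity
  obtain ⟨S, hmem, hcard, happrox⟩ := h s.im
  have hdist : ∀ ρ, riemannZeta₁ ρ = 0 → |ρ.im - s.im| ≤ 1 → c / 4 / logHeight s.im ≤ ‖s - ρ‖ :=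
    fun ρ hρ => le_norm_sub_of_re_le hc₀ hs₁ (hfree ρ hρ)
  have hs₀ : riemannZeta₁ s ≠ 0 := fun hs₀ => by
    have := hdist s hs₀ (by simp)
    simp only [sub_self, norm_zero] at this
    linarith
  have hsum : ‖(S.map fun ρ => 1 / (s - ρ)).sum‖ ≤
      C * logHeight s.im / (c / 4 / logHeight s.im) := by
    refine (norm_sum_one_div_sub_le hwidth₀ fun ρ hρ => hdist ρ ((hmem ρ).mp hρ).2 ?_).trans
      (by gcongr)
    have := (abs_im_le_norm _).trans (mem_closedBall_iff_norm.mp ((hmem ρ).mp hρ).1)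
    simp only [sub_im, landauCenter_im] at this
    linarith
  have happrox' := happrox s
    (mem_closedBall_landauCenter.mpr (abs_le.mpr ⟨by linarith, by linarith⟩)) hs₀
  refine ⟨hs₀, ?_⟩
  calc ‖logDeriv riemannZeta₁ s‖
      ≤ C * logHeight s.im + C * logHeight s.im / (c / 4 / logHeight s.im) :=
        (norm_le_norm_sub_add _ _).trans (add_le_add happrox' hsum)
    _ ≤ C * logHeight s.im ^ 2 + C * logHeight s.im / (c / 4 / logHeight s.im) := by
        gcongr
        exact le_self_pow₀ hL two_ne_zero
    _ = (C + C / (c / 4)) * logHeight s.im ^ 2 := by field_simp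

/-! ### Taylor coefficients -/

/-- The coefficient of `(s - c) ^ n` in the Taylor expansion of `f` about `c`. -/
noncomputable def taylorCoeff (f : ℂ → ℂ) (c : ℂ) (n : ℕ) : ℂ := iteratedDeriv n f c / n.factorial

lemma taylorCoeff_zero (f : ℂ → ℂ) (c : ℂ) : taylorCoeff f c 0 = f c := by
  simp [taylorCoeff]

lemma taylorCoeff_deriv (f : ℂ → ℂ) (c : ℂ) (n : ℕ) :
    taylorCoeff (deriv f) c n = (n + 1) * taylorCoeff f c (n + 1) := by
  have : (n : ℂ) + 1 ≠ 0 := Nat.cast_add_one_ne_zero n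
  rw [taylorCoeff, taylorCoeff, iteratedDeriv_succ', Nat.factorial_succ]
  push_cast
  field_simp

lemma taylorCoeff_mul {f g : ℂ → ℂ} {c : ℂ} (hf : AnalyticAt ℂ f c) (hg : AnalyticAt ℂ g c)
    (n : ℕ) : taylorCoeff (fun s => f s * g s) c n =
      ∑ j ∈ range (n + 1), taylorCoeff f c j * taylorCoeff g c (n - j) := by
  rw [taylorCoeff, iteratedDeriv_fun_mul hf.contDiffAt hg.contDiffAt, sum_div]
  refine sum_congr rfl fun j hj => ?_
  rw [taylorCoeff, taylorCoeff, Nat.cast_choose ℂ (mem_range_succ_iff.mp hj)]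
  have := Nat.cast_ne_zero (R := ℂ).mpr n.factorial_ne_zero
  field_simp

lemma taylorCoeff_inv (c : ℂ) (n : ℕ) :
    taylorCoeff (fun s => s⁻¹) c n = (-1) ^ n * c ^ (-1 - n : ℤ) := by
  have := Nat.cast_ne_zero (R := ℂ).mpr n.factorial_ne_zero
  rw [taylorCoeff, iteratedDeriv_eq_iterate, iter_deriv_inv]
  field_simp

lemma ofReal_cpow_eq_cexp {x : ℝ} (hx : 0 < x) (s : ℂ) :
    (x : ℂ) ^ s = cexp ((Real.log x : ℂ) * s) := by
  rw [cpow_def_of_ne_zero (ofReal_ne_zero.mpr hx.ne'), ofReal_log hx.le]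

lemma taylorCoeff_ofReal_cpow {x : ℝ} (hx : 0 < x) (c : ℂ) (n : ℕ) :
    taylorCoeff (fun s => (x : ℂ) ^ s) c n = x ^ c * (Real.log x : ℂ) ^ n / n.factorial := by
  simp only [taylorCoeff, ofReal_cpow_eq_cexp hx, iteratedDeriv_cexp_const_mul]
  rw [mul_comm]

lemma taylorCoeff_eq_of_eventually_hasSum {g : ℂ → ℂ} {a : ℕ → ℂ} {c : ℂ} (hg : ContinuousAt g c)
    (h : ∀ᶠ s in nhdsWithin c {c}ᶜ, HasSum (fun j => a j * (s - c) ^ j) (g s)) (n : ℕ) :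
    taylorCoeff g c n = a n := by
  set f := Function.update g c (a 0) with hf
  have hfc : f c = a 0 := Function.update_self ..
  have hfg : f =ᶠ[nhdsWithin c {c}ᶜ] g := by
    filter_upwards [self_mem_nhdsWithin] with s hs using Function.update_of_ne hs ..
  have hseries : HasFPowerSeriesAt f (FormalMultilinearSeries.ofScalars ℂ a) c := by
    rw [hasFPowerSeriesAt_iff']
    filter_upwards [eventually_nhdsWithin_iff.mp h] with s hs
    simp only [FormalMultilinearSeries.coeff_ofScalars, smul_eq_mul]
    rcases eq_or_ne s c with rfl | hsc
    · simpa [hfc] using hasSum_single (f := fun j => (s - s) ^ j * a j) 0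
        fun j hj => by simp [hj]
    · simpa only [hf, Function.update_of_ne hsc, mul_comm] using hs hsc
  have hgc : g c = a 0 := by
    rw [← hfc]
    exact tendsto_nhds_unique (hg.tendsto.mono_left nhdsWithin_le_nhds)
      ((hseries.continuousAt.tendsto.mono_left nhdsWithin_le_nhds).congr' hfg)
  rw [hf, ← hgc, Function.update_eq_self] at hseries
  simpa [taylorCoeff] using congr_arg (fun p => p.coeff n)
    (hseries.analyticAt.hasFPowerSeriesAt.eq_formalMultilinearSeries hseries)

/-! ### Residues by integration over rectangles -/

/-- The integral of `f` along the boundary of the rectangle with opposite corners `z` and `w`,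
counterclockwise when `z` is the lower left corner. -/
noncomputable def rectangleIntegral (f : ℂ → ℂ) (z w : ℂ) : ℂ :=
  (∫ x : ℝ in z.re..w.re, f (x + z.im * I)) - (∫ x : ℝ in z.re..w.re, f (x + w.im * I)) +
    I * (∫ y : ℝ in z.im..w.im, f (w.re + y * I)) - I * ∫ y : ℝ in z.im..w.im, f (z.re + y * I)

/-- The closed rectangle with opposite corners `z` and `w`. -/
def rectangle (z w : ℂ) : Set ℂ := Set.uIcc z.re w.re ×ℂ Set.uIcc z.im w.im

/-- The boundary of the rectangle with opposite corners `z` and `w`. -/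
def rectangleBoundary (z w : ℂ) : Set ℂ :=
  Set.uIcc z.re w.re ×ℂ {z.im, w.im} ∪ {z.re, w.re} ×ℂ Set.uIcc z.im w.im

section Rectangle

variable {f g F : ℂ → ℂ} {z w p : ℂ} {x y : ℝ}

lemma rectangleBoundary_subset : rectangleBoundary z w ⊆ rectangle z w :=
  Set.union_subset (fun _ hs => ⟨hs.1, Set.pair_subset Set.left_mem_uIcc Set.right_mem_uIcc hs.2⟩)
    fun _ hs => ⟨Set.pair_subset Set.left_mem_uIcc Set.right_mem_uIcc hs.1, hs.2⟩

lemma mem_rectangleBoundary_horizontal (hx : x ∈ Set.uIcc z.re w.re)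
    (hy : y ∈ ({z.im, w.im} : Set ℝ)) : (x + y * I : ℂ) ∈ rectangleBoundary z w :=
  .inl ⟨by simpa using hx, by simpa using hy⟩

lemma mem_rectangleBoundary_vertical (hx : x ∈ ({z.re, w.re} : Set ℝ))
    (hy : y ∈ Set.uIcc z.im w.im) : (x + y * I : ℂ) ∈ rectangleBoundary z w :=
  .inr ⟨by simpa using hx, by simpa using hy⟩

lemma intervalIntegrable_horizontal (hf : ContinuousOn f (rectangleBoundary z w))
    (hy : y ∈ ({z.im, w.im} : Set ℝ)) :
    IntervalIntegrable (fun x : ℝ => f (x + y * I)) MeasureTheory.volume z.re w.re :=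
  (hf.comp (by fun_prop) fun _ hx =>
    mem_rectangleBoundary_horizontal hx hy).intervalIntegrable

lemma intervalIntegrable_vertical (hf : ContinuousOn f (rectangleBoundary z w))
    (hx : x ∈ ({z.re, w.re} : Set ℝ)) :
    IntervalIntegrable (fun y : ℝ => f (x + y * I)) MeasureTheory.volume z.im w.im :=
  (hf.comp (by fun_prop) fun _ hy =>
    mem_rectangleBoundary_vertical hx hy).intervalIntegrable

lemma rectangleIntegral_congr (h : Set.EqOn f g (rectangleBoundary z w)) :
    rectangleIntegral f z w = rectangleIntegral g z w := by
  have hh {y : ℝ} (hy : y ∈ ({z.im, w.im} : Set ℝ)) :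
      ∫ x : ℝ in z.re..w.re, f (x + y * I) = ∫ x : ℝ in z.re..w.re, g (x + y * I) :=
    intervalIntegral.integral_congr fun x hx => h (mem_rectangleBoundary_horizontal hx hy)
  have hv {x : ℝ} (hx : x ∈ ({z.re, w.re} : Set ℝ)) :
      ∫ y : ℝ in z.im..w.im, f (x + y * I) = ∫ y : ℝ in z.im..w.im, g (x + y * I) :=
    intervalIntegral.integral_congr fun y hy => h (mem_rectangleBoundary_vertical hx hy)
  simp only [rectangleIntegral, hh (.inl rfl), hh (.inr rfl), hv (.inl rfl), hv (.inr rfl)]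

lemma rectangleIntegral_add (hf : ContinuousOn f (rectangleBoundary z w))
    (hg : ContinuousOn g (rectangleBoundary z w)) :
    rectangleIntegral (fun s => f s + g s) z w =
      rectangleIntegral f z w + rectangleIntegral g z w := by
  have hh {y : ℝ} (hy : y ∈ ({z.im, w.im} : Set ℝ)) := intervalIntegral.integral_add
    (intervalIntegrable_horizontal hf hy) (intervalIntegrable_horizontal hg hy)
  have hv {x : ℝ} (hx : x ∈ ({z.re, w.re} : Set ℝ)) := intervalIntegral.integral_add
    (intervalIntegrable_vertical hf hx) (intervalIntegrable_vertical hg hx)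
  simp only [rectangleIntegral, hh (.inl rfl), hh (.inr rfl), hv (.inl rfl), hv (.inr rfl)]
  ring

lemma rectangleIntegral_const_mul (k : ℂ) :
    rectangleIntegral (fun s => k * f s) z w = k * rectangleIntegral f z w := by
  simp only [rectangleIntegral, intervalIntegral.integral_const_mul]
  ring

lemma integral_horizontal_eq_sub (hf : ContinuousOn f (rectangleBoundary z w))
    (hy : y ∈ ({z.im, w.im} : Set ℝ))
    (hF : ∀ x : ℝ, x ∈ Set.uIcc z.re w.re → HasDerivAt F (f (x + y * I)) (x + y * I)) :
    ∫ x : ℝ in z.re..w.re, f (x + y * I) = F (w.re + y * I) - F (z.re + y * I) := by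
  refine intervalIntegral.integral_eq_sub_of_hasDerivAt (f := fun x : ℝ => F (x + y * I))
    (fun x hx => ?_) (intervalIntegrable_horizontal hf hy)
  have hline : HasDerivAt (fun x : ℝ => (x + y * I : ℂ)) 1 x :=
    (hasDerivAt_id (x : ℂ)).comp_ofReal.add_const (y * I)
  exact mul_one (f (x + y * I)) ▸ (hF x hx).comp x hline

lemma mul_integral_vertical_eq_sub (hf : ContinuousOn f (rectangleBoundary z w))
    (hx : x ∈ ({z.re, w.re} : Set ℝ))
    (hF : ∀ y : ℝ, y ∈ Set.uIcc z.im w.im → HasDerivAt F (f (x + y * I)) (x + y * I)) :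
    I * ∫ y : ℝ in z.im..w.im, f (x + y * I) = F (x + w.im * I) - F (x + z.im * I) := by
  rw [mul_comm, ← intervalIntegral.integral_mul_const]
  refine intervalIntegral.integral_eq_sub_of_hasDerivAt (f := fun y : ℝ => F (x + y * I))
    (fun y hy => ?_) ((intervalIntegrable_vertical hf hx).mul_const I)
  have hline : HasDerivAt (fun y : ℝ => (x + y * I : ℂ)) I y := by
    simpa using ((hasDerivAt_id (y : ℂ)).comp_ofReal.mul_const I).const_add (x : ℂ)
  exact (hF y hy).comp y hline

lemma ne_of_mem_rectangleBoundary (hp : p ∈ Set.Ioo z.re w.re ×ℂ Set.Ioo z.im w.im) {s : ℂ}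
    (hs : s ∈ rectangleBoundary z w) : s ≠ p := by
  rintro rfl
  rcases hs with ⟨-, h | h⟩ | ⟨h | h, -⟩
  · exact hp.2.1.ne' h
  · exact hp.2.2.ne h
  · exact hp.1.1.ne' h
  · exact hp.1.2.ne h

lemma log_sub_log_neg_of_im_pos {s : ℂ} (hs : 0 < s.im) : log s - log (-s) = Real.pi * I := by
  simp only [log, norm_neg, arg_neg_eq_arg_sub_pi_of_im_pos hs]
  push_cast
  ring

lemma continuousOn_div_sub_pow (hp : p ∈ Set.Ioo z.re w.re ×ℂ Set.Ioo z.im w.im)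
    (hf : ContinuousOn f (rectangleBoundary z w)) (n : ℕ) :
    ContinuousOn (fun s => f s / (s - p) ^ n) (rectangleBoundary z w) :=
  hf.div (by fun_prop) fun _ hs =>
    pow_ne_zero _ (sub_ne_zero.mpr (ne_of_mem_rectangleBoundary hp hs))

-- `log (s - p)` is an antiderivative of the integrand on every edge but the left one, which it
-- replaces by `log (p - s)`; the two branches differ by `π i` at each of the left corners.
lemma rectangleIntegral_one_div_sub (hp : p ∈ Set.Ioo z.re w.re ×ℂ Set.Ioo z.im w.im) :
    rectangleIntegral (fun s => 1 / (s - p)) z w = 2 * Real.pi * I := by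
  have hcont : ContinuousOn (fun s => 1 / (s - p)) (rectangleBoundary z w) := by
    simpa using continuousOn_div_sub_pow hp (f := fun _ => 1) continuousOn_const 1
  have hlog {s : ℂ} (hs : s - p ∈ slitPlane) : HasDerivAt (fun s => log (s - p)) (1 / (s - p)) s :=
    ((hasDerivAt_id s).sub_const p).clog hs
  have hlog' {s : ℂ} (hs : -(s - p) ∈ slitPlane) :
      HasDerivAt (fun s => log (-(s - p))) (1 / (s - p)) s := by
    simpa only [neg_div_neg_eq] using ((hasDerivAt_id' s).sub_const p).fun_neg.clog hs
  have hbottom := integral_horizontal_eq_sub hcont (.inl rfl) fun x _ =>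
    hlog (mem_slitPlane_iff.mpr (.inr (by simpa using (sub_neg.mpr hp.2.1).ne)))
  have htop := integral_horizontal_eq_sub hcont (.inr rfl) fun x _ =>
    hlog (mem_slitPlane_iff.mpr (.inr (by simpa using (sub_pos.mpr hp.2.2).ne')))
  have hright := mul_integral_vertical_eq_sub hcont (.inr rfl) fun y _ =>
    hlog (mem_slitPlane_iff.mpr (.inl (by simpa using hp.1.2)))
  have hleft := mul_integral_vertical_eq_sub hcont (.inl rfl) fun y _ =>
    hlog' (mem_slitPlane_iff.mpr (.inl (by simpa using hp.1.1)))
  have hupper := log_sub_log_neg_of_im_pos (s := z.re + w.im * I - p) (by simpa using hp.2.2)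
  have hlower := log_sub_log_neg_of_im_pos (s := -(z.re + z.im * I - p)) (by simpa using hp.2.1)
  rw [neg_neg] at hlower
  rw [rectangleIntegral, hbottom, htop, hright, hleft]
  linear_combination hupper + hlower

lemma rectangleIntegral_eq_zero_of_hasDerivAt (hf : ContinuousOn f (rectangleBoundary z w))
    (hF : ∀ s ∈ rectangleBoundary z w, HasDerivAt F (f s) s) : rectangleIntegral f z w = 0 := by
  have hbottom := integral_horizontal_eq_sub hf (.inl rfl) fun x hx =>
    hF _ (mem_rectangleBoundary_horizontal hx (.inl rfl))
  have htop := integral_horizontal_eq_sub hf (.inr rfl) fun x hx =>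
    hF _ (mem_rectangleBoundary_horizontal hx (.inr rfl))
  have hright := mul_integral_vertical_eq_sub hf (.inr rfl) fun y hy =>
    hF _ (mem_rectangleBoundary_vertical (.inr rfl) hy)
  have hleft := mul_integral_vertical_eq_sub hf (.inl rfl) fun y hy =>
    hF _ (mem_rectangleBoundary_vertical (.inl rfl) hy)
  rw [rectangleIntegral, hbottom, htop, hright, hleft]
  ring

lemma rectangleIntegral_eq_zero_of_differentiableOn (hf : DifferentiableOn ℂ f (rectangle z w)) :
    rectangleIntegral f z w = 0 := by
  simpa only [rectangleIntegral, smul_eq_mul] using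
    integral_boundary_rect_eq_zero_of_differentiableOn f z w hf

section CauchyFormula

variable {U : Set ℂ} (hU : IsOpen U) (hzw : rectangle z w ⊆ U)
  (hp : p ∈ Set.Ioo z.re w.re ×ℂ Set.Ioo z.im w.im)
include hU hzw hp

lemma rectangleIntegral_div_sub (hf : DifferentiableOn ℂ f U) :
    rectangleIntegral (fun s => f s / (s - p)) z w = 2 * Real.pi * I * f p := by
  have hpU : p ∈ U := hzw ⟨Set.Icc_subset_uIcc (Set.Ioo_subset_Icc_self hp.1),
    Set.Icc_subset_uIcc (Set.Ioo_subset_Icc_self hp.2)⟩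
  have hslope : DifferentiableOn ℂ (dslope f p) U :=
    (differentiableOn_dslope (hU.mem_nhds hpU)).mpr hf
  have hsplit : Set.EqOn (fun s => f s / (s - p)) (fun s => dslope f p s + f p * (1 / (s - p)))
      (rectangleBoundary z w) := by
    intro s hs
    have hsp := ne_of_mem_rectangleBoundary hp hs
    have := sub_ne_zero.mpr hsp
    simp only [dslope_of_ne f hsp, slope_def_field]
    field_simp
    ring
  have hinv : ContinuousOn (fun s => f p * (1 / (s - p))) (rectangleBoundary z w) := by
    simpa using continuousOn_const.fun_mul
      (continuousOn_div_sub_pow hp (f := fun _ => 1) continuousOn_const 1)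
  rw [rectangleIntegral_congr hsplit,
    rectangleIntegral_add (hslope.continuousOn.mono (rectangleBoundary_subset.trans hzw)) hinv,
    rectangleIntegral_const_mul, rectangleIntegral_one_div_sub hp,
    rectangleIntegral_eq_zero_of_differentiableOn (hslope.mono hzw)]
  ring

/- Integrating the derivative of `f s / (s - p) ^ (m + 1)` over the closed contour lowers the order
of the pole at the cost of differentiating `f`. -/
theorem rectangleIntegral_div_sub_pow (hf : DifferentiableOn ℂ f U) (m : ℕ) :
    rectangleIntegral (fun s => f s / (s - p) ^ (m + 1)) z w =
      2 * Real.pi * I * taylorCoeff f p m := by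
  induction m generalizing f with
  | zero => simpa [taylorCoeff_zero] using rectangleIntegral_div_sub hU hzw hp hf
  | succ m ih =>
    have hBU : rectangleBoundary z w ⊆ U := rectangleBoundary_subset.trans hzw
    have hf' : DifferentiableOn ℂ (deriv f) U := hf.deriv hU
    have hcont := continuousOn_div_sub_pow hp (hf.continuousOn.mono hBU) (m + 2)
    have hcont' := continuousOn_div_sub_pow hp (hf'.continuousOn.mono hBU) (m + 1)
    have hderiv : ∀ s ∈ rectangleBoundary z w, HasDerivAt (fun s => f s / (s - p) ^ (m + 1))
        (deriv f s / (s - p) ^ (m + 1) + -(m + 1) * (f s / (s - p) ^ (m + 2))) s := by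
      intro s hs
      have hsp := sub_ne_zero.mpr (ne_of_mem_rectangleBoundary hp hs)
      have hfs := (hf.differentiableAt (hU.mem_nhds (hBU hs))).hasDerivAt
      refine (hfs.div (((hasDerivAt_id s).sub_const p).fun_pow (m + 1))
        (pow_ne_zero _ hsp)).congr_deriv ?_
      simp only [id, Nat.add_sub_cancel]
      push_cast
      field_simp
      ring
    have hzero := rectangleIntegral_eq_zero_of_hasDerivAt
      (hcont'.fun_add (continuousOn_const.fun_mul hcont)) hderiv
    rw [rectangleIntegral_add hcont' (continuousOn_const.fun_mul hcont),
      rectangleIntegral_const_mul, ih hf', taylorCoeff_deriv] at hzero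
    have := Nat.cast_add_one_ne_zero (R := ℂ) m
    refine mul_left_cancel₀ this ?_
    linear_combination -hzero

end CauchyFormula

end Rectangle

/-! ### The residue at `s = 1` -/

lemma analyticAt_logDeriv_riemannZeta₁ {s : ℂ} (h₀ : riemannZeta₁ s ≠ 0) :
    AnalyticAt ℂ (logDeriv riemannZeta₁) s :=
  have h := differentiable_riemannZeta₁.analyticAt s
  h.deriv.div h h₀

lemma analyticAt_ofReal_cpow {Y : ℝ} (hY : 0 < Y) (s : ℂ) :
    AnalyticAt ℂ (fun s : ℂ => (Y : ℂ) ^ s) s :=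
  analyticAt_const.cpow analyticAt_id (by simpa using hY)

lemma iteratedDeriv_logDeriv_riemannZeta (n : ℕ) {s : ℂ} (hs : s ≠ 1)
    (h₀ : riemannZeta₁ s ≠ 0) :
    iteratedDeriv n (logDeriv riemannZeta) s =
      (-1) ^ (n + 1) * n.factorial / (s - 1) ^ (n + 1) +
        iteratedDeriv n (logDeriv riemannZeta₁) s := by
  have hlocal : logDeriv riemannZeta =ᶠ[nhds s]
      fun s => logDeriv riemannZeta₁ s - (s - 1)⁻¹ := by
    filter_upwards [isOpen_ne.mem_nhds hs,
      differentiable_riemannZeta₁.continuous.continuousAt.eventually_ne h₀] with z hz hz₀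
    rw [logDeriv_riemannZeta hz hz₀, one_div]
  have hinv : AnalyticAt ℂ (fun s => (s - 1)⁻¹) s :=
    (analyticAt_id.sub analyticAt_const).inv (sub_ne_zero.mpr hs)
  have hpole : iteratedDeriv n (fun s : ℂ => (s - 1)⁻¹) s =
      (-1) ^ n * n.factorial / (s - 1) ^ (n + 1) := by
    have hfac := Nat.cast_ne_zero (R := ℂ).mpr n.factorial_ne_zero
    have hcoeff := taylorCoeff_inv (s - 1) n
    rw [taylorCoeff, div_eq_iff hfac, show (-1 - n : ℤ) = -(n + 1 : ℕ) by push_cast; ring,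
      zpow_neg, zpow_natCast] at hcoeff
    rw [iteratedDeriv_comp_sub_const n (fun z : ℂ => z⁻¹) 1]
    simp only [hcoeff]
    ring
  rw [hlocal.iteratedDeriv_eq, iteratedDeriv_fun_sub
    (analyticAt_logDeriv_riemannZeta₁ h₀).contDiffAt hinv.contDiffAt, hpole]
  ring

/-- The regular part `(s - 1) * ζ(s) * Y ^ s / s` of the factor `ζ(s) * Y ^ s / s` of the Perron
integrand. -/
noncomputable def zetaWeight (Y : ℝ) (s : ℂ) : ℂ := riemannZeta₁ s * s⁻¹ * (Y : ℂ) ^ s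

lemma zetaWeight_one (Y : ℝ) : zetaWeight Y 1 = Y := by simp [zetaWeight]

/-- The integrand `(ζ'/ζ)^{(n)}(s) ζ(s) Y ^ s / s` of `perronIntegral`. -/
noncomputable def perronIntegrand (n : ℕ) (Y : ℝ) (s : ℂ) : ℂ :=
  iteratedDeriv n (logDeriv riemannZeta) s * riemannZeta s * (Y : ℂ) ^ s / s

lemma perronIntegrand_eq_add (n : ℕ) (Y : ℝ) {s : ℂ} (hs : s ≠ 1) (h₀ : riemannZeta₁ s ≠ 0) :
    perronIntegrand n Y s =
      (-1) ^ (n + 1) * n.factorial * (zetaWeight Y s / (s - 1) ^ (n + 2)) +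
        iteratedDeriv n (logDeriv riemannZeta₁) s * zetaWeight Y s / (s - 1) := by
  have := sub_ne_zero.mpr hs
  rw [perronIntegrand, iteratedDeriv_logDeriv_riemannZeta n hs h₀, zetaWeight,
    riemannZeta₁_eq_sub_mul hs, pow_succ (s - 1) (n + 1)]
  field_simp

section Laurent

variable {C A : ℕ → ℂ}
  (hC : ∀ᶠ s in nhdsWithin (1 : ℂ) {(1 : ℂ)}ᶜ,
    HasSum (fun j : ℕ => C j * (s - 1) ^ j) (riemannZeta s - 1 / (s - 1)))
  (hA : ∀ᶠ s in nhdsWithin (1 : ℂ) {(1 : ℂ)}ᶜ,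
    HasSum (fun j : ℕ => A j * (s - 1) ^ j)
      (deriv riemannZeta s / riemannZeta s + 1 / (s - 1)))

include hC in
lemma taylorCoeff_riemannZeta₁_succ (j : ℕ) : taylorCoeff riemannZeta₁ 1 (j + 1) = C j := by
  let a : ℕ → ℂ := fun | 0 => 1 | j + 1 => C j
  refine taylorCoeff_eq_of_eventually_hasSum (a := a)
    differentiable_riemannZeta₁.continuous.continuousAt ?_ (j + 1)
  filter_upwards [hC, self_mem_nhdsWithin] with s hs hs₁
  have hs₁' : s - 1 ≠ 0 := sub_ne_zero.mpr hs₁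
  have htail : HasSum (fun j => a (j + 1) * (s - 1) ^ (j + 1)) (riemannZeta₁ s - 1) := by
    convert! hs.mul_right (s - 1) using 1
    · funext j
      ring
    · rw [riemannZeta₁_eq_sub_mul hs₁]
      field_simp
  simpa [a] using (hasSum_nat_add_iff (f := fun j => a j * (s - 1) ^ j) 1).mp htail

include hA in
lemma taylorCoeff_logDeriv_riemannZeta₁ (j : ℕ) :
    taylorCoeff (logDeriv riemannZeta₁) 1 j = A j := by
  have h₁ : riemannZeta₁ 1 ≠ 0 := riemannZeta₁_ne_zero_of_one_le_re (by simp)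
  refine taylorCoeff_eq_of_eventually_hasSum
    (analyticAt_logDeriv_riemannZeta₁ h₁).continuousAt ?_ j
  have hne : ∀ᶠ s in nhdsWithin (1 : ℂ) {(1 : ℂ)}ᶜ, riemannZeta₁ s ≠ 0 :=
    nhdsWithin_le_nhds (differentiable_riemannZeta₁.continuous.continuousAt.eventually_ne h₁)
  filter_upwards [hA, hne, self_mem_nhdsWithin] with s hs h₀ hs₁
  rwa [← logDeriv_apply, logDeriv_riemannZeta hs₁ h₀, sub_add_cancel] at hs

include hC in
lemma taylorCoeff_riemannZeta₁_mul_inv_succ (k : ℕ) :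
    taylorCoeff (fun s => riemannZeta₁ s * s⁻¹) 1 (k + 1) =
      (-1) ^ k * (-1 + ∑ j ∈ range (k + 1), (-1) ^ j * C j) := by
  rw [taylorCoeff_mul (differentiable_riemannZeta₁.analyticAt 1)
    (analyticAt_inv one_ne_zero), sum_range_succ']
  simp only [taylorCoeff_riemannZeta₁_succ hC, taylorCoeff_inv, one_zpow, mul_one, taylorCoeff_zero,
    riemannZeta₁_one, Nat.add_sub_add_right, Nat.sub_zero, one_mul]
  have hsign : ∀ j ∈ range (k + 1), C j * (-1) ^ (k - j) = (-1) ^ k * ((-1) ^ j * C j) := by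
    intro j hj
    obtain ⟨d, rfl⟩ := Nat.exists_eq_add_of_le (mem_range_succ_iff.mp hj)
    rw [Nat.add_sub_cancel_left, pow_add]
    linear_combination -(C j * (-1) ^ d) * (Even.neg_one_pow ⟨j, rfl⟩ : (-1 : ℂ) ^ (j + j) = 1)
  rw [sum_congr rfl hsign, ← mul_sum]
  ring

include hC in
lemma taylorCoeff_zetaWeight_succ {Y : ℝ} (hY : 0 < Y) (n : ℕ) :
    taylorCoeff (zetaWeight Y) 1 (n + 1) =
      Y * (Real.log Y : ℂ) ^ (n + 1) / (n + 1).factorial +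
        ∑ k ∈ range (n + 1), (-1) ^ k * (-1 + ∑ j ∈ range (k + 1), (-1) ^ j * C j) *
          (Y * (Real.log Y : ℂ) ^ (n - k) / (n - k).factorial) := by
  have hmul : AnalyticAt ℂ (fun s => riemannZeta₁ s * s⁻¹) 1 :=
    (differentiable_riemannZeta₁.analyticAt 1).mul (analyticAt_inv one_ne_zero)
  unfold zetaWeight
  rw [taylorCoeff_mul hmul (analyticAt_ofReal_cpow hY 1), sum_range_succ']
  simp only [taylorCoeff_riemannZeta₁_mul_inv_succ hC, taylorCoeff_ofReal_cpow hY, cpow_one,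
    taylorCoeff_zero, riemannZeta₁_one, inv_one, one_mul, Nat.sub_zero, Nat.add_sub_add_right]
  ring

include hC hA in
lemma residue_eq_Mterm {Y : ℝ} (hY : 0 < Y) (n : ℕ) :
    (-1) ^ (n + 1) * n.factorial * taylorCoeff (zetaWeight Y) 1 (n + 1) +
      iteratedDeriv n (logDeriv riemannZeta₁) 1 * zetaWeight Y 1 = Mterm C A n Y := by
  have hfac (j : ℕ) : (j.factorial : ℂ) ≠ 0 := Nat.cast_ne_zero.mpr j.factorial_ne_zero
  have hA_coeff : iteratedDeriv n (logDeriv riemannZeta₁) 1 = n.factorial * A n := by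
    rw [← taylorCoeff_logDeriv_riemannZeta₁ hA, taylorCoeff, mul_div_cancel₀ _ (hfac n)]
  have hmain : (n.factorial : ℂ) * (Y * (Real.log Y : ℂ) ^ (n + 1) / (n + 1).factorial) =
      1 / (n + 1) * (Y * (Real.log Y : ℂ) ^ (n + 1)) := by
    have := hfac n
    have := Nat.cast_add_one_ne_zero (R := ℂ) n
    rw [Nat.factorial_succ]
    push_cast
    field_simp
  have hterm : ∀ k ∈ range (n + 1), (n.factorial : ℂ) *
      ((-1) ^ k * (-1 + ∑ j ∈ range (k + 1), (-1) ^ j * C j) *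
        (Y * (Real.log Y : ℂ) ^ (n - k) / (n - k).factorial)) =
      n.choose k * (-1) ^ k * k.factorial * (-1 + ∑ j ∈ range (k + 1), (-1) ^ j * C j) *
        (Y * (Real.log Y : ℂ) ^ (n - k)) := by
    intro k hk
    have := hfac (n - k)
    rw [← Nat.choose_mul_factorial_mul_factorial (mem_range_succ_iff.mp hk)]
    push_cast
    field_simp
  rw [taylorCoeff_zetaWeight_succ hC hY, mul_assoc, mul_add, hmain, mul_sum,
    sum_congr rfl hterm, hA_coeff, zetaWeight_one, Mterm]
  push_cast
  ring

include hC hA in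
theorem rectangleIntegral_perronIntegrand {z w : ℂ}
    (h₁ : 1 ∈ Set.Ioo z.re w.re ×ℂ Set.Ioo z.im w.im)
    (hzw : ∀ s ∈ rectangle z w, riemannZeta₁ s ≠ 0 ∧ s ≠ 0) {Y : ℝ} (hY : 0 < Y) (n : ℕ) :
    rectangleIntegral (perronIntegrand n Y) z w = 2 * Real.pi * I * Mterm C A n Y := by
  have hopen : IsOpen {s | riemannZeta₁ s ≠ 0 ∧ s ≠ 0} :=
    (isOpen_ne.preimage differentiable_riemannZeta₁.continuous).inter isOpen_ne
  have hweight : DifferentiableOn ℂ (zetaWeight Y) {s | riemannZeta₁ s ≠ 0 ∧ s ≠ 0} := by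
    intro s hs
    exact (((differentiable_riemannZeta₁.analyticAt s).mul (analyticAt_inv hs.2)).mul
      (analyticAt_ofReal_cpow hY s)).differentiableAt.differentiableWithinAt
  have hderiv : DifferentiableOn ℂ (iteratedDeriv n (logDeriv riemannZeta₁))
      {s | riemannZeta₁ s ≠ 0 ∧ s ≠ 0} := by
    intro s hs
    rw [iteratedDeriv_eq_iterate]
    exact ((analyticAt_logDeriv_riemannZeta₁ hs.1).iterated_deriv
      n).differentiableAt.differentiableWithinAt
  have hprod := hderiv.fun_mul hweight
  have hB := rectangleBoundary_subset.trans hzw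
  have hpole := continuousOn_div_sub_pow h₁ (hweight.continuousOn.mono hB) (n + 2)
  have hsimple := continuousOn_div_sub_pow h₁ (hprod.continuousOn.mono hB) 1
  simp only [pow_one] at hsimple
  rw [rectangleIntegral_congr fun s hs =>
      perronIntegrand_eq_add n Y (ne_of_mem_rectangleBoundary h₁ hs) (hB hs).1,
    rectangleIntegral_add (continuousOn_const.fun_mul hpole) hsimple, rectangleIntegral_const_mul,
    rectangleIntegral_div_sub_pow hopen hzw h₁ hweight,
    rectangleIntegral_div_sub hopen hzw h₁ hprod, ← residue_eq_Mterm hC hA hY]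
  ring

include hC hA in
lemma perronIntegral_sub_Mterm_eq {a b V Y : ℝ} (ha : a < 1) (hb : 1 < b) (hV : 0 < V)
    (h : ∀ s : ℂ, a ≤ s.re → s.re ≤ b → |s.im| ≤ V → riemannZeta₁ s ≠ 0 ∧ s ≠ 0) (hY : 0 < Y)
    (n : ℕ) :
    perronIntegral n b V Y - Mterm C A n Y = ((1 / (2 * Real.pi) : ℝ) : ℂ) *
      (I * ((∫ x : ℝ in a..b, perronIntegrand n Y (x + (-V : ℝ) * I)) -
        ∫ x : ℝ in a..b, perronIntegrand n Y (x + V * I)) +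
      ∫ y : ℝ in -V..V, perronIntegrand n Y (a + y * I)) := by
  have hres := rectangleIntegral_perronIntegrand hC hA (z := ⟨a, -V⟩) (w := ⟨b, V⟩)
    ⟨⟨by simpa using ha, by simpa using hb⟩, ⟨by simpa using hV, by simpa using hV⟩⟩
    (fun s hs => by
      rw [rectangle, Set.uIcc_of_le (by simpa using (ha.trans hb).le),
        Set.uIcc_of_le (by simpa using hV.le)] at hs
      exact h s hs.1.1 hs.1.2 (abs_le.mpr hs.2)) hY n
  simp only [rectangleIntegral] at hres
  have hscale : ((1 / (2 * Real.pi) : ℝ) : ℂ) * (2 * Real.pi) = 1 := by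
    exact_mod_cast one_div_mul_cancel Real.two_pi_pos.ne'
  set κ := ((1 / (2 * Real.pi) : ℝ) : ℂ)
  set right := ∫ y : ℝ in -V..V, perronIntegrand n Y (b + y * I)
  set left := ∫ y : ℝ in -V..V, perronIntegrand n Y (a + y * I)
  have hperron : perronIntegral n b V Y = κ * right := rfl
  linear_combination hperron - I * κ * hres + Mterm C A n Y * hscale +
    κ * (right - left - 2 * Real.pi * Mterm C A n Y) * I_mul_I

include hC hA in
theorem norm_perronIntegral_sub_Mterm_le {a b V Y H L : ℝ} (ha : a < 1) (hb : 1 < b) (hV : 0 < V)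
    (h : ∀ s : ℂ, a ≤ s.re → s.re ≤ b → |s.im| ≤ V → riemannZeta₁ s ≠ 0 ∧ s ≠ 0) (hY : 0 < Y)
    (n : ℕ)
    (hH : ∀ s : ℂ, a ≤ s.re → s.re ≤ b → |s.im| = V → ‖perronIntegrand n Y s‖ ≤ H)
    (hL : ∀ s : ℂ, s.re = a → |s.im| ≤ V → ‖perronIntegrand n Y s‖ ≤ L) :
    ‖perronIntegral n b V Y - Mterm C A n Y‖ ≤ (b - a) * H + V * L := by
  have hab : a ≤ b := (ha.trans hb).le
  have hhor {y : ℝ} (hy : |y| = V) :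
      ‖∫ x : ℝ in a..b, perronIntegrand n Y (x + y * I)‖ ≤ H * (b - a) := by
    refine (intervalIntegral.norm_integral_le_of_norm_le_const fun x hx => ?_).trans_eq
      (by rw [abs_of_nonneg (sub_nonneg.mpr hab)])
    rw [Set.uIoc_of_le hab] at hx
    exact hH _ (by simpa using hx.1.le) (by simpa using hx.2) (by simpa using hy)
  have hvert : ‖∫ y : ℝ in -V..V, perronIntegrand n Y (a + y * I)‖ ≤ L * (2 * V) := by
    refine (intervalIntegral.norm_integral_le_of_norm_le_const (C := L) fun y hy => ?_).trans_eq
      (by rw [abs_of_nonneg (by linarith)]; ring)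
    rw [Set.uIoc_of_le (by linarith)] at hy
    exact hL _ (by simp) (by simpa using abs_le.mpr ⟨hy.1.le, hy.2⟩)
  have hbottom := hhor (y := -V) (by rw [abs_neg, abs_of_pos hV])
  have htop := hhor (abs_of_pos hV)
  have hpi : 1 / (2 * Real.pi) ≤ 1 / 2 := by
    have := Real.pi_gt_three
    gcongr
    linarith
  rw [perronIntegral_sub_Mterm_eq hC hA ha hb hV h hY, norm_mul, norm_real,
    Real.norm_of_nonneg (by positivity)]
  refine (mul_le_mul hpi (norm_add_le_of_le (r₁ := H * (b - a) + H * (b - a)) ?_ hvert)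
    (norm_nonneg _) (by norm_num)).trans_eq (by ring)
  rw [norm_mul, norm_I, one_mul]
  exact norm_sub_le_of_le hbottom htop

end Laurent

/-! ### The contour bound -/

lemma logHeight_le_two_mul_log {t V : ℝ} (hV : 3 ≤ V) (ht : |t| ≤ V + 1) :
    logHeight t ≤ 2 * Real.log V := by
  have hsq : |t| + 3 ≤ V ^ 2 := by nlinarith
  simpa only [logHeight, Real.log_pow, Nat.cast_ofNat] using Real.log_le_log (by positivity) hsq

lemma one_le_log_of_three_le {V : ℝ} (hV : 3 ≤ V) : 1 ≤ Real.log V := by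
  rw [Real.le_log_iff_exp_le (by linarith)]
  linarith [Real.exp_one_lt_d9]

lemma norm_perronIntegrand_le {n : ℕ} {Y r q : ℝ} {s : ℂ} (hr : 0 < r) (hs : r ≤ ‖s - 1‖)
    (h₀ : riemannZeta₁ s ≠ 0) (hY : 0 < Y)
    (hq : ‖iteratedDeriv n (logDeriv riemannZeta₁) s‖ ≤ q) :
    ‖perronIntegrand n Y s‖ ≤
      (n.factorial / r ^ (n + 1) + q) * (‖riemannZeta₁ s‖ / ‖s - 1‖ * (Y ^ s.re / ‖s‖)) := by
  have hs₁ : s ≠ 1 := by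
    rintro rfl
    simp only [sub_self, norm_zero] at hs
    exact hr.not_ge hs
  have hderiv : ‖iteratedDeriv n (logDeriv riemannZeta) s‖ ≤ n.factorial / r ^ (n + 1) + q := by
    rw [iteratedDeriv_logDeriv_riemannZeta n hs₁ h₀]
    refine norm_add_le_of_le ?_ hq
    simp only [norm_div, norm_mul, norm_pow, norm_neg, norm_one, one_pow, one_mul, norm_natCast]
    gcongr
  calc ‖perronIntegrand n Y s‖
      = ‖iteratedDeriv n (logDeriv riemannZeta) s‖ *
          (‖riemannZeta₁ s‖ / ‖s - 1‖ * (Y ^ s.re / ‖s‖)) := by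
        rw [perronIntegrand, riemannZeta_eq_inv_sub_mul hs₁, norm_div, norm_mul, norm_mul, norm_mul,
          norm_inv, norm_cpow_eq_rpow_re_of_pos hY]
        ring
    _ ≤ _ := by gcongr

namespace HasLogDerivBound

variable {c B : ℝ} (h : HasLogDerivBound c B) (hc : 0 < c) (hc' : c ≤ 1 / 64) (hB : 0 < B)

include h hc hB in
lemma of_abs_im_le {V : ℝ} (hV : 3 ≤ V) {s : ℂ} (him : |s.im| ≤ V + 1)
    (hre : 1 - c / (2 * Real.log V) ≤ s.re) (hre' : s.re ≤ 9 / 8) :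
    riemannZeta₁ s ≠ 0 ∧ ‖logDeriv riemannZeta₁ s‖ ≤ B * (2 * Real.log V) ^ 2 := by
  have hheight := logHeight_le_two_mul_log hV him
  have hpos := logHeight_pos s.im
  have hwide : c / (2 * Real.log V) ≤ c / logHeight s.im := by gcongr
  obtain ⟨hne, hle⟩ := h s (by linarith) hre'
  exact ⟨hne, hle.trans (by gcongr)⟩

include h hc hc' hB in
lemma norm_iteratedDeriv_le (n : ℕ) {V : ℝ} (hV : 3 ≤ V) {s : ℂ} (him : |s.im| ≤ V)
    (hre : 1 - c / (4 * Real.log V) ≤ s.re) (hre' : s.re ≤ 17 / 16) :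
    ‖iteratedDeriv n (logDeriv riemannZeta₁) s‖ ≤
      n.factorial * (B * (2 * Real.log V) ^ 2) / (c / (4 * Real.log V)) ^ n := by
  have hlog := one_le_log_of_three_le hV
  have hr : 0 < c / (4 * Real.log V) := by positivity
  have hr' : c / (4 * Real.log V) ≤ 1 / 16 := by
    rw [div_le_iff₀ (by positivity)]
    linarith
  have htwice : c / (2 * Real.log V) = 2 * (c / (4 * Real.log V)) := by
    field_simp
    norm_num
  set r := c / (4 * Real.log V)
  have hball {z : ℂ} (hz : z ∈ Metric.closedBall s r) :
      riemannZeta₁ z ≠ 0 ∧ ‖logDeriv riemannZeta₁ z‖ ≤ B * (2 * Real.log V) ^ 2 := by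
    rw [mem_closedBall_iff_norm] at hz
    have hzre := abs_le.mp ((abs_re_le_norm (z - s)).trans hz)
    have hzim := abs_le.mp ((abs_im_le_norm (z - s)).trans hz)
    have hsim := abs_le.mp him
    simp only [sub_re, sub_im] at hzre hzim
    exact h.of_abs_im_le hc hB hV (abs_le.mpr ⟨by linarith, by linarith⟩)
      (by linarith) (by linarith)
  refine norm_iteratedDeriv_le_of_forall_mem_sphere_norm_le n hr ?_
    fun z hz => (hball (Metric.sphere_subset_closedBall hz)).2
  exact DifferentiableOn.diffContOnCl_ball (U := {z | riemannZeta₁ z ≠ 0})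
    (fun z hz => (analyticAt_logDeriv_riemannZeta₁ hz).differentiableAt.differentiableWithinAt)
    fun z hz => (hball hz).1

include h hc hc' hB in
lemma exists_norm_perronIntegrand_le (n : ℕ) :
    ∃ D > 0, ∀ V ≥ 3, ∀ Y > 0, ∀ s : ℂ, 1 - c / (4 * Real.log V) ≤ s.re → s.re ≤ 17 / 16 →
      |s.im| ≤ V → c / (4 * Real.log V) ≤ ‖s - 1‖ → ‖perronIntegrand n Y s‖ ≤
        D * Real.log V ^ (n + 2) * (‖riemannZeta₁ s‖ / ‖s - 1‖ * (Y ^ s.re / ‖s‖)) := by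
  refine ⟨n.factorial * ((4 / c) ^ (n + 1) + 4 * B * (4 / c) ^ n), by positivity,
    fun V hV Y hY s hre hre' him hdist => ?_⟩
  have hlog := one_le_log_of_three_le hV
  have hwide : c / (4 * Real.log V) ≤ c / (2 * Real.log V) := by gcongr; norm_num
  have hne := (h.of_abs_im_le hc hB hV (s := s) (by linarith) (by linarith) (by linarith)).1
  refine (norm_perronIntegrand_le (by positivity) hdist hne hY
    (h.norm_iteratedDeriv_le hc hc' hB n hV him hre hre')).trans ?_
  gcongr
  calc n.factorial / (c / (4 * Real.log V)) ^ (n + 1) +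
        n.factorial * (B * (2 * Real.log V) ^ 2) / (c / (4 * Real.log V)) ^ n
      = n.factorial * ((4 / c) ^ (n + 1) * Real.log V ^ (n + 1) +
          4 * B * (4 / c) ^ n * Real.log V ^ (n + 2)) := by
        simp only [div_pow, mul_pow]
        field_simp
        ring
    _ ≤ n.factorial * ((4 / c) ^ (n + 1) * Real.log V ^ (n + 2) +
          4 * B * (4 / c) ^ n * Real.log V ^ (n + 2)) := by
        gcongr
        norm_num
    _ = _ := by ring

include h hc hc' hB in
lemma exists_norm_perronIntegrand_le_of_abs_im_eq (n : ℕ) :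
    ∃ D > 0, ∀ V ≥ 3, ∀ Y ≥ 1, ∀ s : ℂ, 1 - c / (4 * Real.log V) ≤ s.re → s.re ≤ 17 / 16 →
      |s.im| = V → ‖perronIntegrand n Y s‖ ≤
        D * Real.log V ^ (n + 2) * (Y ^ s.re / √V) := by
  obtain ⟨D, hD₀, hD⟩ := h.exists_norm_perronIntegrand_le hc hc' hB n
  obtain ⟨K, hK⟩ := exists_norm_riemannZeta₁_le_rpow (a := 1 / 2) (b := 17 / 16) (by norm_num)
    (by norm_num)
  refine ⟨D * max K 1, by positivity, fun V hV Y hY s hre hre' him => ?_⟩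
  have hlog := one_le_log_of_three_le hV
  have hr : c / (4 * Real.log V) ≤ 1 / 2 := by
    rw [div_le_iff₀ (by positivity)]
    linarith
  have hs : V ≤ ‖s‖ := him ▸ abs_im_le_norm s
  have hs₁ : V ≤ ‖s - 1‖ := by simpa [him] using abs_im_le_norm (s - 1)
  have hs₁' : 0 < ‖s - 1‖ := by linarith
  have hzeta : ‖riemannZeta₁ s‖ / ‖s - 1‖ ≤ max K 1 * √V := by
    have hbound := hK s (by linarith) hre' (by linarith)
    rw [him, show (1 - 1 / 2 : ℝ) = 1 / 2 by norm_num, ← Real.sqrt_eq_rpow] at hbound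
    rw [div_le_iff₀ hs₁']
    calc ‖riemannZeta₁ s‖ ≤ K * (‖s - 1‖ * √V) := hbound
      _ ≤ max K 1 * (‖s - 1‖ * √V) := by gcongr; exact le_max_left K 1
      _ = _ := by ring
  calc ‖perronIntegrand n Y s‖
      ≤ D * Real.log V ^ (n + 2) * (‖riemannZeta₁ s‖ / ‖s - 1‖ * (Y ^ s.re / ‖s‖)) :=
        hD V hV Y (by linarith) s hre hre' him.le (by linarith)
    _ ≤ D * Real.log V ^ (n + 2) * (max K 1 * √V * (Y ^ s.re / V)) := by gcongr
    _ = D * max K 1 * Real.log V ^ (n + 2) * (Y ^ s.re / √V) := by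
        rw [div_eq_mul_one_div (Y ^ s.re) √V, ← Real.sqrt_div_self']
        ring

include h hc hc' hB in
lemma exists_norm_perronIntegrand_le_of_re_eq (n : ℕ) :
    ∃ D > 0, ∀ V ≥ 3, ∀ Y > 0, ∀ s : ℂ, s.re = 1 - c / (4 * Real.log V) → |s.im| ≤ V →
      ‖perronIntegrand n Y s‖ ≤ D * Real.log V ^ (n + 3) * (V ^ 2 * Y ^ s.re) := by
  obtain ⟨D, hD₀, hD⟩ := h.exists_norm_perronIntegrand_le hc hc' hB n
  obtain ⟨K, hK₁, hK⟩ := exists_norm_riemannZeta₁_le (a := 1 / 2) (b := 1) (by norm_num)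
  refine ⟨D * (K * 2 ^ 2 * (4 / c) * 2), by positivity, fun V hV Y hY s hre him => ?_⟩
  have hlog := one_le_log_of_three_le hV
  have hr : 0 < c / (4 * Real.log V) := by positivity
  have hr' : c / (4 * Real.log V) ≤ 1 / 2 := by
    rw [div_le_iff₀ (by positivity)]
    linarith
  have hs : 1 / 2 ≤ ‖s‖ := by linarith [re_le_norm s]
  have hs₁ : c / (4 * Real.log V) ≤ ‖s - 1‖ := by
    simpa [hre, abs_of_pos hr] using abs_re_le_norm (s - 1)
  have hzeta : ‖riemannZeta₁ s‖ ≤ K * (2 * V) ^ 2 :=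
    (hK s (by linarith) (by linarith)).trans (by gcongr; linarith)
  calc ‖perronIntegrand n Y s‖
      ≤ D * Real.log V ^ (n + 2) * (‖riemannZeta₁ s‖ / ‖s - 1‖ * (Y ^ s.re / ‖s‖)) :=
        hD V hV Y hY s hre.ge (by linarith) him hs₁
    _ ≤ D * Real.log V ^ (n + 2) *
          (K * (2 * V) ^ 2 / (c / (4 * Real.log V)) * (Y ^ s.re / (1 / 2))) := by gcongr
    _ = _ := by
        field_simp
        ring

end HasLogDerivBound

theorem exists_norm_perronIntegral_sub_Mterm_le {C A : ℕ → ℂ} (n : ℕ)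
    (hC : ∀ᶠ s in nhdsWithin (1 : ℂ) {(1 : ℂ)}ᶜ,
      HasSum (fun j : ℕ => C j * (s - 1) ^ j) (riemannZeta s - 1 / (s - 1)))
    (hA : ∀ᶠ s in nhdsWithin (1 : ℂ) {(1 : ℂ)}ᶜ,
      HasSum (fun j : ℕ => A j * (s - 1) ^ j)
        (deriv riemannZeta s / riemannZeta s + 1 / (s - 1))) :
    ∃ c > 0, ∃ K > 0, ∀ V ≥ 3, ∀ Y ≥ 1, ∀ b : ℝ, 1 < b → b ≤ 17 / 16 →
      ‖perronIntegral n b V Y - Mterm C A n Y‖ ≤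
        K * Real.log V ^ (n + 3) * (Y ^ b / √V + V ^ 3 * Y ^ (1 - c / Real.log V)) := by
  obtain ⟨c, B, hc, hc', hB, h⟩ := exists_hasLogDerivBound
  obtain ⟨D, hD₀, hD⟩ := h.exists_norm_perronIntegrand_le_of_abs_im_eq hc hc' hB n
  obtain ⟨E, hE₀, hE⟩ := h.exists_norm_perronIntegrand_le_of_re_eq hc hc' hB n
  refine ⟨c / 4, by positivity, D + E, by positivity, fun V hV Y hY b hb hb' => ?_⟩
  have hlog := one_le_log_of_three_le hV
  have hr : 0 < c / (4 * Real.log V) := by positivity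
  have hr' : c / (4 * Real.log V) ≤ 1 / 2 := by
    rw [div_le_iff₀ (by positivity)]
    linarith
  have hwide : c / (4 * Real.log V) ≤ c / (2 * Real.log V) := by gcongr; norm_num
  have hregular (s : ℂ) (hre : 1 - c / (4 * Real.log V) ≤ s.re) (hre' : s.re ≤ b)
      (him : |s.im| ≤ V) : riemannZeta₁ s ≠ 0 ∧ s ≠ 0 := by
    refine ⟨(h.of_abs_im_le hc hB hV (by linarith) (by linarith) (by linarith)).1, ?_⟩
    rintro rfl
    simp only [zero_re] at hre
    linarith
  have hedges := norm_perronIntegral_sub_Mterm_le hC hA (by linarith) hb (by linarith) hregular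
    (by linarith) n (H := D * Real.log V ^ (n + 2) * (Y ^ b / √V))
    (fun s hre hre' him => (hD V hV Y hY s hre (by linarith) him).trans (by gcongr))
    (fun s hre him => hre ▸ hE V hV Y (by linarith) s hre him)
  rw [div_div]
  calc ‖perronIntegral n b V Y - Mterm C A n Y‖
      ≤ _ := hedges
    _ ≤ 1 * ((D + E) * Real.log V ^ (n + 3) * (Y ^ b / √V)) + V * ((D + E) * Real.log V ^ (n + 3) *
          (V ^ 2 * Y ^ (1 - c / (4 * Real.log V)))) := by
        gcongr
        · linarith
        · linarith
        · norm_num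
        · linarith
    _ = _ := by ring

/-! ### Optimising the height -/

lemma log_le_log_two_pi_mul {Y : ℝ} (hY : 0 < Y) : Real.log Y ≤ Real.log (2 * Real.pi * Y) :=
  Real.log_le_log hY (by nlinarith [Real.pi_gt_three])

lemma rpow_one_add_one_div_log_le {Y : ℝ} (hY : 1 < Y) :
    Y ^ (1 + 1 / Real.log (2 * Real.pi * Y)) ≤ Real.exp 1 * Y := by
  have hY₀ : 0 < Y := by linarith
  have hle := log_le_log_two_pi_mul hY₀
  have hpos := Real.log_pos hY
  rw [Real.rpow_add hY₀, Real.rpow_one, mul_comm, Real.rpow_def_of_pos hY₀, mul_one_div]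
  gcongr
  exact div_le_one_of_le₀ hle (hpos.le.trans hle)

lemma one_add_one_div_log_mem_Ioc {Y : ℝ} (hY : 0 < Y) (hlog : 16 ≤ Real.log Y) :
    1 + 1 / Real.log (2 * Real.pi * Y) ∈ Set.Ioc 1 (17 / 16) := by
  have hle : 16 ≤ Real.log (2 * Real.pi * Y) := hlog.trans (log_le_log_two_pi_mul hY)
  have hinv := one_div_le_one_div_of_le (by norm_num) hle
  exact ⟨lt_add_of_pos_right 1 (by positivity), by linarith⟩

lemma pow_le_mul_exp_div_four (m : ℕ) {x : ℝ} (hx : 0 ≤ x) :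
    x ^ m ≤ 4 ^ m * m.factorial * Real.exp (x / 4) := by
  have h := Real.pow_div_factorial_le_exp (x / 4) (by positivity) m
  rw [div_pow, div_div, div_le_iff₀ (by positivity)] at h
  exact h.trans_eq (by ring)

lemma pow_mul_perron_error_le (m : ℕ) {c w Y : ℝ} (hY : 1 < Y) (hw : 0 < w)
    (hcw : c * Real.log Y = 4 * w ^ 2) :
    w ^ m * (Y ^ (1 + 1 / Real.log (2 * Real.pi * Y)) / √(Real.exp w) +
        Real.exp w ^ 3 * Y ^ (1 - c / w)) ≤
      4 ^ m * m.factorial * (Real.exp 1 + 1) * Y * Real.exp (-(w / 4)) := by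
  have hY₀ : 0 < Y := by linarith
  have hleft : Real.exp w ^ 3 * Y ^ (1 - c / w) = Y * Real.exp (-w) := by
    have hsaving : Real.log Y * (c / w) = 4 * w := by
      rw [mul_div_assoc', div_eq_iff hw.ne']
      linear_combination hcw
    rw [Real.rpow_def_of_pos hY₀, ← Real.exp_nat_mul, mul_sub, hsaving, mul_one, sub_eq_add_neg,
      Real.exp_add, Real.exp_log hY₀, mul_left_comm, ← Real.exp_add]
    congr 2
    push_cast
    ring
  rw [← Real.exp_half, hleft]
  calc w ^ m * (Y ^ (1 + 1 / Real.log (2 * Real.pi * Y)) / Real.exp (w / 2) + Y * Real.exp (-w))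
      ≤ 4 ^ m * m.factorial * Real.exp (w / 4) *
          (Real.exp 1 * Y / Real.exp (w / 2) + Y * Real.exp (-(w / 2))) := by
        gcongr
        · exact pow_le_mul_exp_div_four m hw.le
        · exact rpow_one_add_one_div_log_le hY
        · linarith
    _ = 4 ^ m * m.factorial * (Real.exp 1 + 1) * Y *
          (Real.exp (w / 4) * Real.exp (-(w / 2))) := by
        rw [Real.exp_neg]
        ring
    _ = _ := by
        rw [← Real.exp_add]
        ring_nf

end PerronZeta

/-- unconditionally, with `c = 1 + 1/log(2πY)` and
`V = e^{C√(log Y)}`, the truncated Perron integral equals the residue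
`M_n(Y)` up to an error `O(Y e^{-C'√(log Y)})`. -/
theorem perron_integral_residue_unconditional (n : ℕ) (hn : 1 ≤ n) (C A : ℕ → ℂ)
    (hC : ∀ᶠ s in nhdsWithin (1 : ℂ) {(1 : ℂ)}ᶜ,
      HasSum (fun j : ℕ => C j * (s - 1) ^ j) (riemannZeta s - 1 / (s - 1)))
    (hA : ∀ᶠ s in nhdsWithin (1 : ℂ) {(1 : ℂ)}ᶜ,
      HasSum (fun j : ℕ => A j * (s - 1) ^ j)
        (deriv riemannZeta s / riemannZeta s + 1 / (s - 1))) :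
    ∃ c₁ > (0 : ℝ), ∃ c₂ > (0 : ℝ), ∃ K > (0 : ℝ), ∃ Y₀ : ℝ, ∀ Y ≥ Y₀,
      ∀ c V : ℝ, c = 1 + 1 / Real.log (2 * Real.pi * Y) →
        V = Real.exp (c₁ * Real.sqrt (Real.log Y)) →
        ‖perronIntegral n c V Y - Mterm C A n Y‖ ≤
          K * Y * Real.exp (-c₂ * Real.sqrt (Real.log Y)) := by
  obtain ⟨c, hc, K, hK, hbound⟩ := PerronZeta.exists_norm_perronIntegral_sub_Mterm_le n hC hA
  have hlarge : ∀ᶠ Y in Filter.atTop, 16 ≤ Real.log Y ∧ 2 ≤ √c / 2 * √(Real.log Y) :=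
    (Real.tendsto_log_atTop.eventually_ge_atTop 16).and
      (((Real.tendsto_sqrt_atTop.comp Real.tendsto_log_atTop).const_mul_atTop
        (by positivity)).eventually_ge_atTop 2)
  obtain ⟨Y₀, hY₀⟩ := Filter.eventually_atTop.mp (hlarge.and (Filter.eventually_gt_atTop 1))
  refine ⟨√c / 2, by positivity, √c / 2 / 4, by positivity,
    K * (4 ^ (n + 3) * (n + 3).factorial * (Real.exp 1 + 1)), by positivity, Y₀, ?_⟩
  rintro Y hY _ _ rfl rfl
  obtain ⟨⟨hlog, hw⟩, hY₁⟩ := hY₀ Y hY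
  set w := √c / 2 * √(Real.log Y) with hw_def
  have hcw : c * Real.log Y = 4 * w ^ 2 := by
    rw [hw_def, mul_pow, div_pow, Real.sq_sqrt hc.le, Real.sq_sqrt (by linarith)]
    ring
  have hV : 3 ≤ Real.exp w := by linarith [Real.add_one_le_exp w]
  obtain ⟨hb, hb'⟩ := PerronZeta.one_add_one_div_log_mem_Ioc (by linarith) hlog
  calc ‖perronIntegral n _ (Real.exp w) Y - Mterm C A n Y‖
      ≤ _ := hbound _ hV Y hY₁.le _ hb hb'
    _ ≤ K * (4 ^ (n + 3) * (n + 3).factorial * (Real.exp 1 + 1) * Y * Real.exp (-(w / 4))) := by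
        rw [Real.log_exp, mul_assoc K]
        have herror := PerronZeta.pow_mul_perron_error_le (n + 3) hY₁ (by linarith) hcw
        exact mul_le_mul_of_nonneg_left herror hK.le
    _ = _ := by
        rw [hw_def]
        ring_nf
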